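/- arXiv:math/0508126 — 3 statements merged into one kernel-verified Lean document; each statement's English description precedes it below -/
import Mathlib

section
/- Let q be a positive integer and let ξ be a Dirichlet character modulo q². Then there exists a residue class a (mod q) such that for every integer x with x ≡ 1 (mod q) and gcd(x, q) = 1, one has ξ(x) = e(a(x-1)/q²), where e(t) = exp(2πit). (Note (x-1)/q² · a is well defined modulo 1 since q² | a(x-1) up to the stated normalization: a(x-1)/q² depends modulo 1 only on x mod q² and on a mod q.) -/
/-- `e(t) = exp(2πit)`. -/
noncomputable def e (t : ℝ) : ℂ := Complex.exp (2 * Real.pi * Complex.I * t)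

/-- Every Dirichlet character `ξ` modulo `q²` restricts, on integers `x ≡ 1 (mod q)`
coprime to `q`, to `x ↦ e(a(x-1)/q²)` for some residue class `a (mod q)`. -/
theorem dirichlet_char_sq_on_one_mod_q (q : ℕ) (hq : 0 < q)
    (ξ : DirichletCharacter ℂ (q ^ 2)) :
    ∃ a : ℤ, ∀ x : ℤ, x ≡ 1 [ZMOD (q : ℤ)] → Int.gcd x q = 1 →
      ξ (x : ZMod (q ^ 2)) = e (((a * (x - 1) : ℤ) : ℝ) / (q : ℝ) ^ 2) := by
  have hqq : (q : ZMod (q ^ 2)) * q = 0 := by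
    have := ZMod.natCast_self (q ^ 2)
    rw [← this]; push_cast; ring
  let f : AddChar ℤ ℂ :=
    { toFun := fun k => ξ (1 + (q : ZMod (q ^ 2)) * (k : ZMod (q ^ 2)))
      map_zero_eq_one' := by simp
      map_add_eq_mul' := by
        intro k l
        rw [← map_mul]
        congr 1
        push_cast
        linear_combination (-(k : ZMod (q ^ 2)) * l) * hqq }
  have hf : ∀ k : ℤ, f k = ξ (1 + (q : ZMod (q ^ 2)) * (k : ZMod (q ^ 2))) := fun _ => rfl
  have hpow : ∀ k : ℤ, f k = f 1 ^ k := by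
    intro k
    rw [← AddChar.map_zsmul_eq_zpow]; simp
  have h1 : f 1 ^ q = 1 := by
    rw [← zpow_natCast, ← hpow, hf]
    push_cast
    rw [hqq]; simp
  haveI : NeZero q := ⟨hq.ne'⟩
  obtain ⟨a, -, ha⟩ := (Complex.isPrimitiveRoot_exp q hq.ne').eq_pow_of_pow_eq_one h1
  refine ⟨a, fun x hx _ => ?_⟩
  obtain ⟨k, hk⟩ := hx.symm.dvd
  have hx' : x = 1 + q * k := by linarith
  have hq0 : (q : ℂ) ≠ 0 := by exact_mod_cast hq.ne'
  have h2 : ξ (x : ZMod (q ^ 2)) = f k := by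
    rw [hf, hx']; push_cast; rfl
  rw [h2, hpow, ← ha, ← Complex.exp_nat_mul, ← Complex.exp_int_mul, e, hk]
  congr 1
  push_cast
  field_simp
end

section
/- Let q be a positive integer and a an integer. Let G_a denote the set of Dirichlet characters ξ modulo q² such that ξ(x) = e(a(x-1)/q²) for every integer x with x ≡ 1 (mod q) and gcd(x,q)=1, where e(t) = exp(2πit). Then G_a has exactly φ(q) elements, and for any fixed ξ ∈ G_a, every element of G_a is obtained in a unique way as ξ·χ where χ ranges over the Dirichlet characters modulo q² induced by Dirichlet characters modulo q. -/
/-- The set `G_a` of Dirichlet characters `ξ` modulo `q²` with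
`ξ(x) = e(a(x-1)/q²)` for all integers `x ≡ 1 (mod q)` coprime to `q`. -/
def Ga (q : ℕ) (a : ℤ) : Set (DirichletCharacter ℂ (q ^ 2)) :=
  {ξ | ∀ x : ℤ, x ≡ 1 [ZMOD (q : ℤ)] → Int.gcd x q = 1 →
    ξ (x : ZMod (q ^ 2)) = e (((a * (x - 1) : ℤ) : ℝ) / (q : ℝ) ^ 2)}

lemma e_eq_std (q : ℕ) [NeZero (q ^ 2)] (j : ℤ) :
    e ((j : ℝ) / (q : ℝ) ^ 2) = ZMod.stdAddChar (j : ZMod (q ^ 2)) := by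
  rw [ZMod.stdAddChar_coe, e]
  congr 1
  push_cast
  ring

lemma mem_ker_iff_modEq (q : ℕ) (u : (ZMod (q ^ 2))ˣ) (x : ℤ)
    (hx : (x : ZMod (q ^ 2)) = u) :
    u ∈ (ZMod.unitsMap (dvd_pow_self q two_ne_zero)).ker ↔ x ≡ 1 [ZMOD (q : ℤ)] := by
  rw [MonoidHom.mem_ker, Units.ext_iff, ZMod.unitsMap_val, ← hx,
    ZMod.cast_intCast (dvd_pow_self q two_ne_zero), Units.val_one, ← ZMod.intCast_eq_intCast_iff]
  simp

lemma mem_Ga_iff (q : ℕ) [NeZero (q ^ 2)] (a : ℤ) (ξ : DirichletCharacter ℂ (q ^ 2)) :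
    ξ ∈ Ga q a ↔ ∀ u ∈ (ZMod.unitsMap (dvd_pow_self q two_ne_zero)).ker,
      ξ u = ZMod.stdAddChar ((a : ZMod (q ^ 2)) * ((u : ZMod (q ^ 2)) - 1)) := by
  constructor
  · intro h u hu
    obtain ⟨x, hx⟩ := ZMod.intCast_surjective (u : ZMod (q ^ 2))
    have hm := (mem_ker_iff_modEq q u x hx).1 hu
    have hg : Int.gcd x q = 1 := by
      obtain ⟨k, hk⟩ := hm.symm.dvd
      exact Int.isCoprime_iff_gcd_eq_one.1 ⟨1, -k, by linear_combination hk⟩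
    have := h x hm hg
    rw [e_eq_std, hx] at this
    rw [this]; push_cast; rw [hx]
  · intro h x hm hg
    have hu : IsUnit (x : ZMod (q ^ 2)) := by
      rw [ZMod.coe_int_isUnit_iff_isCoprime]
      push_cast
      exact (Int.isCoprime_iff_gcd_eq_one.2 hg).symm.pow_left
    have := h hu.unit ((mem_ker_iff_modEq q hu.unit x rfl).2 hm)
    rw [e_eq_std]
    push_cast
    exact this

lemma ker_mul_zero (q : ℕ) (u v : (ZMod (q ^ 2))ˣ)
    (hu : u ∈ (ZMod.unitsMap (dvd_pow_self q two_ne_zero)).ker)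
    (hv : v ∈ (ZMod.unitsMap (dvd_pow_self q two_ne_zero)).ker) :
    ((u : ZMod (q ^ 2)) - 1) * ((v : ZMod (q ^ 2)) - 1) = 0 := by
  obtain ⟨x, hx⟩ := ZMod.intCast_surjective (u : ZMod (q ^ 2))
  obtain ⟨y, hy⟩ := ZMod.intCast_surjective (v : ZMod (q ^ 2))
  have h1 := ((mem_ker_iff_modEq q u x hx).1 hu).symm.dvd
  have h2 := ((mem_ker_iff_modEq q v y hy).1 hv).symm.dvd
  rw [← hx, ← hy]
  have := (ZMod.intCast_zmod_eq_zero_iff_dvd ((x - 1) * (y - 1)) (q ^ 2)).2 (by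
    push_cast; rw [pow_two]; exact mul_dvd_mul h1 h2)
  push_cast at this
  exact this

lemma Ga_nonempty (q : ℕ) [NeZero (q ^ 2)] (a : ℤ) : ∃ ξ, ξ ∈ Ga q a := by
  let f : (ZMod.unitsMap (dvd_pow_self q two_ne_zero)).ker →* ℂ :=
    { toFun := fun u => ZMod.stdAddChar
        ((a : ZMod (q ^ 2)) * (((u : (ZMod (q ^ 2))ˣ) : ZMod (q ^ 2)) - 1))
      map_one' := by simp
      map_mul' := fun u v => by
        rw [← AddChar.map_add_eq_mul]
        congr 1
        have := ker_mul_zero q u v u.2 v.2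
        push_cast
        linear_combination (a : ZMod (q ^ 2)) * this }
  obtain ⟨g, hg⟩ := MonoidHom.domRestrict_surjective ℂ
    (ZMod.unitsMap (dvd_pow_self q two_ne_zero)).ker f.toHomUnits
  refine ⟨MulChar.ofUnitHom g, (mem_Ga_iff q a _).2 fun u hu => ?_⟩
  have := congrArg (fun z : ℂˣ => (z : ℂ)) (DFunLike.congr_fun hg ⟨u, hu⟩)
  rw [MulChar.ofUnitHom_coe]
  exact this

lemma mul_mem_Ga (q : ℕ) [NeZero (q ^ 2)] (a : ℤ) (ξ : DirichletCharacter ℂ (q ^ 2))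
    (h : ξ ∈ Ga q a) (χ : DirichletCharacter ℂ q) :
    ξ * DirichletCharacter.changeLevel (dvd_pow_self q two_ne_zero) χ ∈ Ga q a := by
  rw [mem_Ga_iff] at h ⊢
  intro u hu
  rw [MulChar.mul_apply, h u hu, DirichletCharacter.changeLevel_def, MulChar.ofUnitHom_coe,
    MonoidHom.comp_apply, MonoidHom.mem_ker.1 hu]
  simp

lemma Ga_existsUnique (q : ℕ) [NeZero (q ^ 2)] (a : ℤ) (ξ ξ' : DirichletCharacter ℂ (q ^ 2))
    (h : ξ ∈ Ga q a) (h' : ξ' ∈ Ga q a) :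
    ∃! χ₀ : DirichletCharacter ℂ q,
      ξ' = ξ * DirichletCharacter.changeLevel (dvd_pow_self q two_ne_zero) χ₀ := by
  have hf : DirichletCharacter.FactorsThrough (ξ⁻¹ * ξ') q := by
    rw [DirichletCharacter.factorsThrough_iff_ker_unitsMap (dvd_pow_self q two_ne_zero)]
    intro u hu
    have e1 := (mem_Ga_iff q a ξ).1 h u hu
    have e2 := (mem_Ga_iff q a ξ').1 h' u hu
    rw [MonoidHom.mem_ker, Units.ext_iff, MulChar.coe_toUnitHom, MulChar.mul_apply, e2, ← e1,
      ← MulChar.mul_apply, inv_mul_cancel, MulChar.one_apply_coe, Units.val_one]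
  obtain ⟨χ, hχ, hu⟩ := hf.existsUnique
  refine ⟨χ, ?_, fun y hy => hu y ?_⟩
  · exact inv_mul_eq_iff_eq_mul.1 hχ
  · exact inv_mul_eq_iff_eq_mul.2 hy

/-- `G_a` has exactly `φ(q)` elements, and for any fixed `ξ ∈ G_a`, every element of
`G_a` is obtained in a unique way as `ξ·χ`, where `χ` ranges over the characters modulo
`q²` induced (by change of level) by Dirichlet characters modulo `q`. -/
theorem card_Ga_and_unique_factorization (q : ℕ) (hq : 0 < q) (a : ℤ) :
    Nat.card (Ga q a) = Nat.totient q ∧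
      ∀ ξ ∈ Ga q a, ∀ ξ' ∈ Ga q a,
        ∃! χ₀ : DirichletCharacter ℂ q,
          ξ' = ξ * DirichletCharacter.changeLevel (dvd_pow_self q two_ne_zero) χ₀ := by
  have : NeZero q := ⟨hq.ne'⟩
  have : NeZero (q ^ 2) := ⟨(pow_pos hq 2).ne'⟩
  refine ⟨?_, fun ξ h ξ' h' => Ga_existsUnique q a ξ ξ' h h'⟩
  obtain ⟨ξ, h⟩ := Ga_nonempty q a
  rw [← DirichletCharacter.card_eq_totient_of_hasEnoughRootsOfUnity ℂ q]
  symm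
  refine Nat.card_congr (Equiv.ofBijective
    (fun χ : DirichletCharacter ℂ q => (⟨_, mul_mem_Ga q a ξ h χ⟩ : Ga q a)) ⟨?_, ?_⟩)
  · intro χ χ' hh
    exact DirichletCharacter.changeLevel_injective _ (mul_left_cancel (congrArg Subtype.val hh))
  · rintro ⟨ξ', h'⟩
    obtain ⟨χ, hχ, -⟩ := Ga_existsUnique q a ξ ξ' h h'
    exact ⟨χ, Subtype.ext hχ.symm⟩
end

section
/- (Weil bound for Kloosterman sums) For any positive integer c and any integers m and n, |Σ_{a,d mod c, ad ≡ 1 (mod c)} e((ma + nd)/c)| ≤ gcd(m, n, c)^{1/2} · c^{1/2} · τ(c), where e(t) = exp(2πit), the sum runs over residues a mod c that are invertible with d the inverse of a modulo c, and τ(c) is the number of divisors of c. -/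
section

open Polynomial
theorem kl_zpow_exists {p : ℕ} {k : Type} [Field k] (n : k) (hn : n ≠ 0) (hp : 1 ≤ p) (z : ℤ) :
    ∃ U V : k[X], U.natDegree ≤ p * z.natAbs ∧ V.natDegree ≤ p * z.natAbs ∧
      ∀ (S : Type) [CommRing S] [Algebra k S] (y : S) (u : Sˣ),
        (u : S) + algebraMap k S n * (u⁻¹ : Sˣ) = y ^ p - y →
        ((u ^ z : Sˣ) : S) = aeval y U * u + aeval y V := by
  have hT : (X ^ p - X : k[X]).natDegree ≤ p := by
    refine (natDegree_sub_le _ _).trans ?_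
    simp [hp]
  have key : ∀ j : ℕ, ∃ U V : k[X], U.natDegree ≤ p * j ∧ V.natDegree ≤ p * j ∧
      ∀ (S : Type) [CommRing S] [Algebra k S] (y : S) (u : Sˣ),
        (u : S) + algebraMap k S n * (u⁻¹ : Sˣ) = y ^ p - y →
        (u : S) ^ (j + 1) = aeval y U * u + aeval y V := by
    intro j
    induction j with
    | zero => exact ⟨1, 0, by simp, by simp, by intros; simp⟩
    | succ j ih =>
      obtain ⟨U, V, hU, hV, h⟩ := ih
      refine ⟨(X ^ p - X) * U + V, - C n * U, ?_, ?_, ?_⟩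
      · refine (natDegree_add_le _ _).trans (max_le (natDegree_mul_le.trans ?_) ?_)
        · nlinarith
        · nlinarith
      · rw [← C_neg]
        refine (natDegree_C_mul_le _ _).trans ?_
        nlinarith
      · intro S _ _ y u hu
        have h1 := h S y u hu
        have h2 : (u : S) * (u⁻¹ : Sˣ) = 1 := by simp
        have h3 : (u : S) * u = (y ^ p - y) * u - algebraMap k S n := by
          rw [← hu]; linear_combination (- algebraMap k S n) * h2
        rw [pow_succ, h1]
        simp only [map_add, map_mul, map_sub, map_neg, map_pow, aeval_X, aeval_C]
        linear_combination aeval y U * h3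
  rcases z with (_ | j) | j
  · exact ⟨0, 1, by simp, by simp, by intros; simp⟩
  · obtain ⟨U, V, hU, hV, h⟩ := key j
    refine ⟨U, V, ?_, ?_, ?_⟩
    · exact hU.trans (Nat.mul_le_mul_left p (Nat.le_succ j))
    · exact hV.trans (Nat.mul_le_mul_left p (Nat.le_succ j))
    · intro S _ _ y u hu
      rw [← h S y u hu]
      exact (congrArg Units.val (zpow_natCast u (j+1))).trans (Units.val_pow_eq_pow_val _ _)
  · obtain ⟨U, V, hU, hV, h⟩ := key j
    refine ⟨- C ((n⁻¹) ^ (j+1)) * U, C ((n⁻¹) ^ (j+1)) * (U * (X ^ p - X) + V), ?_, ?_, ?_⟩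
    · rw [← C_neg]
      refine (natDegree_C_mul_le _ _).trans (hU.trans ?_)
      simp
      nlinarith
    · refine (natDegree_C_mul_le _ _).trans ?_
      refine (natDegree_add_le _ _).trans (max_le (natDegree_mul_le.trans ?_) ?_)
      · simp
        nlinarith
      · simp
        nlinarith
    · intro S _ _ y u hu
      have hnu : algebraMap k S n * algebraMap k S n⁻¹ = 1 := by
        rw [← map_mul, mul_inv_cancel₀ hn, map_one]
      let nu : Sˣ := ⟨algebraMap k S n, algebraMap k S n⁻¹, hnu, by rw [mul_comm]; exact hnu⟩
      have h1 := h S y (nu * u⁻¹) (by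
        rw [← hu]
        simp only [mul_inv_rev, inv_inv, Units.val_mul]
        have : ((nu⁻¹ : Sˣ) : S) = algebraMap k S n⁻¹ := rfl
        rw [this]
        have : ((nu : Sˣ) : S) = algebraMap k S n := rfl
        rw [this]
        linear_combination (u : S) * hnu)
      have e1 : ((nu : Sˣ) : S) = algebraMap k S n := rfl
      simp only [Units.val_mul, e1] at h1
      have e2 : ((u ^ (Int.negSucc j) : Sˣ) : S) = ((u⁻¹ : Sˣ) : S) ^ (j+1) := by
        rw [zpow_negSucc, ← inv_pow, Units.val_pow_eq_pow_val]
      rw [e2]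
      have e3 : (algebraMap k S n⁻¹) ^ (j+1) * (algebraMap k S n) ^ (j+1) = 1 := by
        rw [← mul_pow, mul_comm, hnu, one_pow]
      simp only [map_add, map_mul, map_sub, map_neg, map_pow, aeval_X, aeval_C]
      rw [mul_pow] at h1
      linear_combination (algebraMap k S n⁻¹) ^ (j+1) * h1 - ((u⁻¹ : Sˣ) : S) ^ (j+1) * e3
         + (algebraMap k S n⁻¹) ^ (j+1) * (aeval y U) * hu

theorem kl_exists_rel {k M ι : Type} [Field k] [AddCommGroup M] [Module k M] [Fintype ι]
    (W : Submodule k M) [FiniteDimensional k W] (w : ι → M) (hw : ∀ i, w i ∈ W)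
    (h : Module.finrank k W < Fintype.card ι) :
    ∃ c : ι → k, c ≠ 0 ∧ ∑ i, c i • w i = 0 := by
  by_contra! hcon
  have : LinearIndependent k (fun i => (⟨w i, hw i⟩ : W)) := by
    rw [Fintype.linearIndependent_iff]
    intro g hg
    by_contra! hne
    apply hcon g
    · rintro rfl; simp at hne
    · have := congrArg (Submodule.subtype W) hg
      simpa using this
  have := this.fintype_card_le_finrank
  omega

theorem kl_exists_rel_poly {k ι : Type} [Field k] [Fintype ι] (D : ℕ) (U V : ι → k[X])
    (hU : ∀ i, (U i).natDegree < D) (hV : ∀ i, (V i).natDegree < D)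
    (h : 2 * D < Fintype.card ι) :
    ∃ c : ι → k, c ≠ 0 ∧ ∑ i, C (c i) * U i = 0 ∧ ∑ i, C (c i) * V i = 0 := by
  have hf : ∀ P : k[X], P.natDegree < D → P ∈ degreeLT k D := by
    intro P hP
    rw [mem_degreeLT]
    exact (degree_le_natDegree).trans_lt (by exact_mod_cast hP)
  have hfr : Module.finrank k (degreeLT k D) = D := by
    rw [(degreeLTEquiv k D).finrank_eq]; simp
  have : FiniteDimensional k (degreeLT k D) := 
    Module.Finite.equiv (degreeLTEquiv k D).symm
  obtain ⟨c, hc, hs⟩ := kl_exists_rel (LinearMap.range 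
    (((degreeLT k D).subtype).prodMap ((degreeLT k D).subtype)))
    (fun i => (U i, V i)) (by 
      intro i
      exact ⟨(⟨U i, hf _ (hU i)⟩, ⟨V i, hf _ (hV i)⟩), rfl⟩) (by
      refine (LinearMap.finrank_range_le _).trans_lt ?_
      rw [Module.finrank_prod, hfr]; omega)
  refine ⟨c, hc, ?_, ?_⟩
  · have := congrArg Prod.fst hs
    simpa [Prod.fst_sum, smul_eq_C_mul] using this
  · have := congrArg Prod.snd hs
    simpa [Prod.snd_sum, smul_eq_C_mul] using this

end

section

open Polynomial
/-- The evaluation `Y ↦ t`, `X ↦ s t^p`. -/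
noncomputable def klPhi (p : ℕ) (k : Type) [Field k] : k[X][X] →+* k[X][X] :=
  eval₂RingHom (mapRingHom (C : k →+* k[X])) (C X * X ^ p)

theorem klPhi_mono (p : ℕ) (k : Type) [Field k] (c : k) (a b : ℕ) :
    klPhi p k (C (C c * X ^ a) * X ^ b) = C (C c * X ^ b) * X ^ (a + p * b) := by
  simp only [klPhi, coe_eval₂RingHom, eval₂_mul, eval₂_C, eval₂_pow, eval₂_X, coe_mapRingHom,
    Polynomial.map_mul, map_C, Polynomial.map_pow, map_X, C_mul, C_pow]
  ring

theorem klPhi_rel (p : ℕ) (hp : 2 ≤ p) (k : Type) [Field k] (n : k) :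
    (klPhi p k (X ^ 2 - C (X ^ p - X) * X + C (C n))).leadingCoeff = X ^ 2 - X := by
  have h1 : klPhi p k (X ^ 2 - C (X ^ p - X) * X + C (C n)) =
      (C X * X ^ (p + 1) + C (C n)) + C (X ^ 2 - X) * X ^ (2 * p) := by
    simp only [klPhi, coe_eval₂RingHom, eval₂_mul, eval₂_C, eval₂_pow, eval₂_X, coe_mapRingHom,
      eval₂_add, eval₂_sub,
      Polynomial.map_mul, map_C, Polynomial.map_pow, map_X, C_mul, C_pow, Polynomial.map_sub, C_sub]
    ring
  have hne : (X ^ 2 - X : k[X]) ≠ 0 := by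
    intro h
    have := congrArg (fun f => coeff f 2) h
    simp [coeff_X] at this
  rw [h1, leadingCoeff_add_of_degree_lt]
  · rw [leadingCoeff_mul, leadingCoeff_C, leadingCoeff_X_pow, mul_one]
  · rw [degree_C_mul_X_pow _ hne]
    refine (degree_add_le _ _).trans_lt (max_lt ?_ ?_)
    · refine (degree_C_mul_X_pow_le _ _).trans_lt ?_
      exact_mod_cast (by omega)
    · refine degree_C_le.trans_lt ?_
      exact_mod_cast (by omega)

theorem kl_indep {k ι : Type} [Field k] [Fintype ι] (p : ℕ) (hp : 2 ≤ p) (n : k)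
    (c : ι → k) (hc : c ≠ 0) (a b : ι → ℕ)
    (hinj : Function.Injective (fun i => a i + p * b i)) :
    ¬ (X ^ 2 - C (X ^ p - X) * X + C (C n) : k[X][X]) ∣
       ∑ i, C (C (c i) * X ^ (a i)) * X ^ (b i) := by
  intro hd
  have hd' := map_dvd (klPhi p k) hd
  rw [map_sum] at hd'
  simp only [klPhi_mono] at hd'
  set F : k[X][X] := ∑ i, C (C (c i) * X ^ (b i)) * X ^ (a i + p * b i) with hF
  have hcoeff : ∀ d, F.coeff d = ∑ i, if d = a i + p * b i then C (c i) * X ^ (b i) else 0 := by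
    intro d
    simp only [hF, finsetSum_coeff, coeff_C_mul_X_pow]
  have hcoeff' : ∀ i, F.coeff (a i + p * b i) = C (c i) * X ^ (b i) := by
    intro i
    rw [hcoeff, Finset.sum_eq_single i]
    · simp
    · intro j _ hj
      rw [if_neg]
      intro h
      exact hj (hinj h.symm)
    · simp
  obtain ⟨i0, hi0⟩ := Function.ne_iff.mp hc
  have hF0 : F ≠ 0 := by
    intro h
    have := hcoeff' i0
    rw [h, coeff_zero] at this
    have h2 := congrArg (eval 1) this
    simp at h2
    exact hi0 h2.symm
  have hl : F.leadingCoeff ≠ 0 := leadingCoeff_ne_zero.mpr hF0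
  have hex : ∃ i, F.natDegree = a i + p * b i := by
    by_contra! hcon
    apply hl
    rw [leadingCoeff, hcoeff]
    apply Finset.sum_eq_zero
    intro i _
    rw [if_neg (hcon i)]
  obtain ⟨i, hi⟩ := hex
  have hlc : F.leadingCoeff = C (c i) * X ^ (b i) := by
    rw [leadingCoeff, hi, hcoeff']
  obtain ⟨Q, hQ⟩ := hd'
  have h3 := congrArg leadingCoeff hQ
  rw [leadingCoeff_mul, klPhi_rel p hp, hlc] at h3
  have h4 := congrArg (eval 1) h3
  simp at h4
  apply hl
  rw [hlc, h4]
  simp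

/-- the pair `(G,H)` is nonzero. -/
theorem kl_nonvanish {k ι : Type} [Field k] [Fintype ι] (p : ℕ) (hp : 2 ≤ p) (n : k) (hn : n ≠ 0)
    (U V : ℤ → k[X])
    (hUV : ∀ z, ∀ (S : Type) [CommRing S] [Algebra k S] (y : S) (u : Sˣ),
        (u : S) + algebraMap k S n * (u⁻¹ : Sˣ) = y ^ p - y →
        ((u ^ z : Sˣ) : S) = aeval y (U z) * u + aeval y (V z))
    (c : ι → k) (hc : c ≠ 0) (a : ι → ℕ) (b : ι → ℤ)
    (hinj : Function.Injective (fun i => (a i : ℤ) + p * b i))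
    (hG : ∑ i, C (c i) * (X ^ (a i) * U (b i)) = 0)
    (hH : ∑ i, C (c i) * (X ^ (a i) * V (b i)) = 0) : False := by
  obtain ⟨N, hN⟩ : ∃ N : ℕ, ∀ i, 0 ≤ b i + N := by
    refine ⟨∑ i, (b i).natAbs, fun i => ?_⟩
    have := Finset.single_le_sum (f := fun i => (b i).natAbs) (fun _ _ => Nat.zero_le _)
      (Finset.mem_univ i)
    omega
  choose b' hb' using fun i => Int.eq_ofNat_of_zero_le (hN i)
  set r : k[X][X] := X ^ 2 - C (X ^ p - X) * X + C (C n) with hr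
  refine kl_indep p hp n c hc a b' ?_ ?_
  · intro i j hij
    apply hinj
    simp only at hij ⊢
    have h1 : (a i : ℤ) + p * b' i = a j + p * b' j := by exact_mod_cast hij
    rw [← hb', ← hb'] at h1
    linarith
  · rw [← hr, ← AdjoinRoot.mk_eq_zero]
    set x : AdjoinRoot r := AdjoinRoot.root r with hx
    set y : AdjoinRoot r := AdjoinRoot.of r X with hy
    have hrel : x ^ 2 - (y ^ p - y) * x + algebraMap k _ n = 0 := by
      have := AdjoinRoot.mk_self (f := r)
      rw [hr] at this
      simp only [map_add, map_sub, map_mul, map_pow, AdjoinRoot.mk_X, AdjoinRoot.mk_C] at this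
      rw [← this]
      rfl
    have hnn : algebraMap k (AdjoinRoot r) n * algebraMap k (AdjoinRoot r) n⁻¹ = 1 := by
      rw [← map_mul, mul_inv_cancel₀ hn, map_one]
    have hux : x * ((y ^ p - y - x) * algebraMap k (AdjoinRoot r) n⁻¹) = 1 := by
      linear_combination - algebraMap k (AdjoinRoot r) n⁻¹ * hrel + hnn
    let u : (AdjoinRoot r)ˣ := ⟨x, _, hux, by rw [mul_comm]; exact hux⟩
    have hu1 : (u : AdjoinRoot r) = x := rfl
    have hu2 : ((u⁻¹ : (AdjoinRoot r)ˣ) : AdjoinRoot r) = 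
      (y ^ p - y - x) * algebraMap k (AdjoinRoot r) n⁻¹ := rfl
    have hUV' := fun z => hUV z (AdjoinRoot r) y u (by
      rw [hu1, hu2]
      linear_combination (y ^ p - y - x) * hnn)
    have hsum : ∑ i, algebraMap k (AdjoinRoot r) (c i) * y ^ (a i) *
        ((u ^ (b i) : (AdjoinRoot r)ˣ) : AdjoinRoot r) = 0 := by
      have e1 := congrArg (aeval y) hG
      have e2 := congrArg (aeval y) hH
      simp only [map_sum, map_mul, aeval_C, map_pow, aeval_X, map_zero] at e1 e2
      have : ∀ i, algebraMap k (AdjoinRoot r) (c i) * y ^ (a i) *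
        ((u ^ (b i) : (AdjoinRoot r)ˣ) : AdjoinRoot r) = 
        algebraMap k (AdjoinRoot r) (c i) * (y ^ (a i) * aeval y (U (b i))) * x +
        algebraMap k (AdjoinRoot r) (c i) * (y ^ (a i) * aeval y (V (b i))) := by
        intro i
        rw [hUV', hu1]; ring
      simp only [this, Finset.sum_add_distrib, ← Finset.sum_mul, e1, e2]
      simp
    have hsum2 : ∑ i, algebraMap k (AdjoinRoot r) (c i) * y ^ (a i) * x ^ (b' i) = 0 := by
      have : ∀ i, algebraMap k (AdjoinRoot r) (c i) * y ^ (a i) * x ^ (b' i) = 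
        algebraMap k (AdjoinRoot r) (c i) * y ^ (a i) *
        ((u ^ (b i) : (AdjoinRoot r)ˣ) : AdjoinRoot r) * x ^ N := by
        intro i
        have e3 : u ^ (b' i) = u ^ (b i) * u ^ N := by
          rw [← zpow_natCast u (b' i), ← zpow_natCast u N, ← zpow_add, hb' i]
        have e4 := congrArg Units.val e3
        simp only [Units.val_mul, Units.val_pow_eq_pow_val, hu1] at e4
        rw [e4]; ring
      simp only [this, ← Finset.sum_mul, hsum, zero_mul]
    rw [map_sum, ← hsum2]
    refine Finset.sum_congr rfl fun i _ => ?_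
    simp only [map_mul, map_pow, AdjoinRoot.mk_X, AdjoinRoot.mk_C]
    rfl

end

section

open Polynomial
theorem kl_aux (p : ℕ) [hpp : Fact p.Prime] (hp2 : p ≠ 2) (n c0 : ZMod p) (hn : n ≠ 0)
    (μ : ℕ) (hμ : 1 ≤ μ) :
    ∃ g : (ZMod p)[X], g ≠ 0 ∧ 2 * g.natDegree ≤ (p ^ μ) ^ 2 + 8 * p * p ^ μ ∧
      ∀ (S : Type) [Field S] [Algebra (ZMod p) S] (x y : S), x ≠ 0 → x ^ 2 ≠ algebraMap (ZMod p) S n →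
        x + algebraMap (ZMod p) S n * x⁻¹ = y ^ p - y → x ^ ((p ^ μ) ^ 2) = x →
        y ^ ((p ^ μ) ^ 2) = y + algebraMap (ZMod p) S c0 → aeval y g = 0 := by
  have hp3 : 3 ≤ p := by
    have := hpp.out.two_le
    omega
  have hodd : Odd p := hpp.out.odd_of_ne_two hp2
  obtain ⟨A, hA⟩ : Odd (p ^ (μ - 1)) := hodd.pow
  set P := p ^ μ with hP
  have hPA : P = p * (2 * A + 1) := by
    rw [← hA, hP, ← pow_succ']; congr 1; omega
  clear_value P
  choose U V hU hV hUV using fun z : ℤ => kl_zpow_exists (p := p) n hn (by omega) z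
  let ι := Fin (2 * A + 1) × Fin p × Fin (2 * A + 5) × Fin p
  let fa : ι → ℤ := fun i => (i.1 : ℤ) - A
  let fb : ι → ℕ := fun i => i.2.1
  let fj : ι → ℤ := fun i => (i.2.2.1 : ℤ) - (A + 2 : ℕ)
  let fk : ι → ℕ := fun i => i.2.2.2
  have hfa : ∀ i, (fa i).natAbs ≤ A := by
    intro i
    have := i.1.2
    simp only [fa]; omega
  have hfj : ∀ i, (fj i).natAbs ≤ A + 2 := by
    intro i
    have := i.2.2.1.2
    simp only [fj]; omega
  have hfb : ∀ i, fb i + 1 ≤ p := fun i => i.2.1.2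
  have hfk : ∀ i, fk i + 1 ≤ p := fun i => i.2.2.2.2
  have hdeg : ∀ (W : ℤ → (ZMod p)[X]), (∀ z, (W z).natDegree ≤ p * z.natAbs) → ∀ i,
      (X ^ (fb i * P) * (X + C c0) ^ (fk i) * W (fa i * P + fj i)).natDegree <
        p * P + p + p * (A * P + (A + 2)) := by
    intro W hW i
    have h1 : (fa i * P + fj i).natAbs ≤ A * P + (A + 2) := by
      refine (Int.natAbs_add_le _ _).trans (add_le_add ?_ (hfj i))
      rw [Int.natAbs_mul, Int.natAbs_natCast]
      exact Nat.mul_le_mul_right _ (hfa i)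
    have h2 : (X ^ (fb i * P) * (X + C c0) ^ (fk i) * W (fa i * P + fj i)).natDegree ≤ 
        fb i * P + fk i + p * (A * P + (A + 2)) := by
      refine natDegree_mul_le.trans (add_le_add (natDegree_mul_le.trans (add_le_add ?_ ?_)) ?_)
      · exact natDegree_X_pow_le _
      · refine natDegree_pow_le.trans ?_
        rw [natDegree_X_add_C]; simp
      · exact (hW _).trans (Nat.mul_le_mul_left _ h1)
    have h3 : fb i * P ≤ p * P := Nat.mul_le_mul_right _ (by have := hfb i; omega)
    have := hfk i
    omega
  obtain ⟨c, hc, hc1, hc2⟩ := kl_exists_rel_poly (ι := ι) (p * P + p + p * (A * P + (A + 2)))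
    (fun i => X ^ (fb i * P) * (X + C c0) ^ (fk i) * U (fa i * P + fj i))
    (fun i => X ^ (fb i * P) * (X + C c0) ^ (fk i) * V (fa i * P + fj i))
    (hdeg U hU) (hdeg V hV) (by
      simp only [ι, Fintype.card_prod, Fintype.card_fin]
      have e1 : (2 * A + 1) * (p * ((2 * A + 5) * p)) = p * P * (2 * A + 5) := by rw [hPA]; ring
      rw [e1]
      have e2 : 3 * (2 * A + 1) ≤ P := by rw [hPA]; exact Nat.mul_le_mul_right _ hp3
      have e3 : p * (3 * (2 * A + 1)) ≤ p * P := Nat.mul_le_mul_left _ e2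
      nlinarith)
  set G : (ZMod p)[X] := ∑ i, C (c i) * (X ^ (fb i + P * fk i) * U (fa i + P * fj i)) with hG
  set H : (ZMod p)[X] := ∑ i, C (c i) * (X ^ (fb i + P * fk i) * V (fa i + P * fj i)) with hH
  have hdeg2 : ∀ (W : ℤ → (ZMod p)[X]), (∀ z, (W z).natDegree ≤ p * z.natAbs) →
      2 * (∑ i, C (c i) * (X ^ (fb i + P * fk i) * W (fa i + P * fj i))).natDegree ≤
        P ^ 2 + 8 * p * P := by
    intro W hW
    have h0 : (∑ i, C (c i) * (X ^ (fb i + P * fk i) * W (fa i + P * fj i))).natDegree ≤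
        p + P * p + p * (A + P * (A + 2)) := by
      apply natDegree_sum_le_of_forall_le
      intro i _
      refine (natDegree_C_mul_le _ _).trans ?_
      have h1 : (fa i + P * fj i).natAbs ≤ A + P * (A + 2) := by
        refine (Int.natAbs_add_le _ _).trans (add_le_add (hfa i) ?_)
        rw [Int.natAbs_mul, Int.natAbs_natCast]
        exact Nat.mul_le_mul_left _ (hfj i)
      refine natDegree_mul_le.trans (add_le_add ((natDegree_X_pow_le _).trans ?_) ?_)
      · have := hfb i
        have := hfk i
        exact add_le_add (by omega) (Nat.mul_le_mul_left _ (by omega))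
      · exact (hW _).trans (Nat.mul_le_mul_left _ h1)
    have h4 : P ^ 2 = 2 * (p * P * A) + p * P := by rw [sq]; nth_rw 1 [hPA]; ring
    have h5 : 1 ≤ P := by rw [hPA]; nlinarith
    have h6 : 2 * (p * A) ≤ p * P := by
      have : 2 * A ≤ P := by rw [hPA]; nlinarith
      nlinarith
    have h7 : p ≤ p * P := by nlinarith
    nlinarith
  have hne : ¬ (G = 0 ∧ H = 0) := by
    rintro ⟨hG0, hH0⟩
    refine kl_nonvanish p (by omega) n hn U V hUV c hc (fun i => fb i + P * fk i)
      (fun i => fa i + P * fj i) ?_ hG0 hH0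
    have hrange : ∀ i, 0 ≤ (fb i : ℤ) + p * (fa i + A) ∧ (fb i : ℤ) + p * (fa i + A) < P := by
      intro i
      have h1 := i.1.2
      have h2 := i.2.1.2
      have h3 : fa i + A = (i.1 : ℕ) := by simp [fa]
      rw [h3]
      refine ⟨by positivity, ?_⟩
      have h4 : (i.1 : ℕ) + 1 ≤ 2 * A + 1 := h1
      have h5 : fb i + p * i.1 < P := by rw [hPA]; nlinarith [hfb i]
      exact_mod_cast h5
    intro i j hij
    simp only at hij
    push_cast at hij
    have hij' : ((fb i : ℤ) + p * (fa i + A)) + P * (fk i + p * fj i) = 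
       ((fb j : ℤ) + p * (fa j + A)) + P * (fk j + p * fj j) := by linear_combination hij
    have hm := congrArg (fun z : ℤ => z % P) hij'
    simp only [Int.add_mul_emod_self_left] at hm
    rw [Int.emod_eq_of_lt (hrange i).1 (hrange i).2, Int.emod_eq_of_lt (hrange j).1 (hrange j).2] at hm
    have hP0 : (P : ℤ) ≠ 0 := by
      have : P ≠ 0 := by rw [hPA]; positivity
      exact_mod_cast this
    have hq : (fk i : ℤ) + p * fj i = fk j + p * fj j := by
      apply mul_left_cancel₀ hP0
      linear_combination hij' - hm
    have hsmall : ∀ b b' : ℕ, ∀ z z' : ℤ, b + 1 ≤ p → b' + 1 ≤ p → (b : ℤ) + p * z = b' + p * z' →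
       b = b' ∧ z = z' := by
      intro b b' z z' hb hb' h
      have hm := congrArg (fun z : ℤ => z % p) h
      simp only [Int.add_mul_emod_self_left] at hm
      rw [Int.emod_eq_of_lt (by omega) (by omega), Int.emod_eq_of_lt (by omega) (by omega)] at hm
      refine ⟨by exact_mod_cast hm, ?_⟩
      have hp0 : (p : ℤ) ≠ 0 := by exact_mod_cast hpp.out.ne_zero
      apply mul_left_cancel₀ hp0
      linear_combination h - hm
    obtain ⟨g1, g2⟩ := hsmall _ _ _ _ (hfk i) (hfk j) hq
    obtain ⟨g3, g4⟩ := hsmall _ _ _ _ (hfb i) (hfb j) hm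
    ext
    · simp only [fa] at g4; omega
    · exact g3
    · simp only [fj] at g2; omega
    · exact g1
  have hvan : ∀ (S : Type) [Field S] [Algebra (ZMod p) S] (x y : S), x ≠ 0 →
        x + algebraMap (ZMod p) S n * x⁻¹ = y ^ p - y → x ^ (P ^ 2) = x →
        y ^ (P ^ 2) = y + algebraMap (ZMod p) S c0 → aeval y G * x + aeval y H = 0 := by
    intro S _ _ x y hx hxy hxq hyq
    have : CharP S p := charP_of_injective_algebraMap (algebraMap (ZMod p) S).injective p
    let u : Sˣ := Units.mk0 x hx
    have hu : (u : S) = x := rfl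
    have hUV' := fun z => hUV z S y u (by rw [← hxy]; simp [u])
    have huq : u ^ (P ^ 2) = u := Units.ext (by simpa [u] using hxq)
    have e1 : aeval y G * x + aeval y H = ∑ i, algebraMap (ZMod p) S (c i) * y ^ (fb i + P * fk i) *
        ((u ^ (fa i + P * fj i) : Sˣ) : S) := by
      simp only [hUV', hG, hH, map_sum, map_mul, aeval_C, map_pow, aeval_X, Finset.sum_mul, hu]
      rw [← Finset.sum_add_distrib]
      exact Finset.sum_congr rfl fun i _ => by ring
    have e2 : (aeval y G * x + aeval y H) ^ P = 0 := by
      rw [e1, hP, sum_pow_char_pow, ← hP]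
      have f1 := congrArg (aeval y) hc1
      have f2 := congrArg (aeval y) hc2
      simp only [map_sum, map_mul, aeval_C, map_pow, aeval_X, map_zero, map_add] at f1 f2
      have : ∀ i, (algebraMap (ZMod p) S (c i) * y ^ (fb i + P * fk i) *
          ((u ^ (fa i + P * fj i) : Sˣ) : S)) ^ P = 
          algebraMap (ZMod p) S (c i) * (y ^ (fb i * P) * (y + algebraMap (ZMod p) S c0) ^ (fk i) *
            aeval y (U (fa i * P + fj i))) * x + 
          algebraMap (ZMod p) S (c i) * (y ^ (fb i * P) * (y + algebraMap (ZMod p) S c0) ^ (fk i) *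
            aeval y (V (fa i * P + fj i))) := by
        intro i
        have g1 : ((u ^ (fa i + P * fj i) : Sˣ) : S) ^ P = ((u ^ (fa i * P + fj i) : Sˣ) : S) := by
          rw [← Units.val_pow_eq_pow_val]
          congr 1
          rw [← zpow_natCast, ← zpow_mul, add_mul, zpow_add, zpow_add]
          congr 1
          rw [show (P : ℤ) * fj i * P = ((P ^ 2 : ℕ) : ℤ) * fj i by push_cast; ring, zpow_mul,
            zpow_natCast, huq]
        have g2 : algebraMap (ZMod p) S (c i) ^ P = algebraMap (ZMod p) S (c i) := by
          rw [← map_pow, hP, ZMod.pow_card_pow]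
        have g3 : (y ^ (fb i + P * fk i)) ^ P = 
            y ^ (fb i * P) * (y + algebraMap (ZMod p) S c0) ^ (fk i) := by
          rw [← hyq, ← pow_mul, ← pow_mul, ← pow_add]
          congr 1; ring
        rw [mul_pow, mul_pow, g1, g2, g3, hUV', hu]
        ring
      simp only [this, Finset.sum_add_distrib, ← Finset.sum_mul, f1, f2]
      simp
    exact eq_zero_of_pow_eq_zero e2
  have hvan2 : ∀ (S : Type) [Field S] [Algebra (ZMod p) S] (x y : S), x ≠ 0 → 
        x ^ 2 ≠ algebraMap (ZMod p) S n →
        x + algebraMap (ZMod p) S n * x⁻¹ = y ^ p - y → x ^ (P ^ 2) = x →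
        y ^ (P ^ 2) = y + algebraMap (ZMod p) S c0 → aeval y G = 0 ∧ aeval y H = 0 := by
    intro S _ _ x y hx hxn hxy hxq hyq
    have hn' : algebraMap (ZMod p) S n ≠ 0 := by simpa using hn
    have h1 := hvan S x y hx hxy hxq hyq
    have h2 := hvan S (algebraMap (ZMod p) S n * x⁻¹) y (by positivity) (by
      rw [← hxy]; field_simp; ring) (by
      rw [mul_pow, inv_pow, hxq, ← map_pow, hP, ← pow_mul, ZMod.pow_card_pow]) hyq
    have h3 : aeval y G * (x - algebraMap (ZMod p) S n * x⁻¹) = 0 := by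
      linear_combination h1 - h2
    have h4 : x - algebraMap (ZMod p) S n * x⁻¹ ≠ 0 := by
      intro h
      apply hxn
      field_simp at h
      linear_combination h
    have h5 : aeval y G = 0 := (mul_eq_zero.mp h3).resolve_right h4
    exact ⟨h5, by rw [h5] at h1; simpa using h1⟩
  by_cases hG0 : G = 0
  · refine ⟨H, fun h => hne ⟨hG0, h⟩, hdeg2 V hV, ?_⟩
    intro S _ _ x y h1 h2 h3 h4 h5
    exact (hvan2 S x y h1 h2 h3 h4 h5).2
  · refine ⟨G, hG0, hdeg2 U hU, ?_⟩
    intro S _ _ x y h1 h2 h3 h4 h5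
    exact (hvan2 S x y h1 h2 h3 h4 h5).1

end

section

open Polynomial
theorem kl_pow_trace {p : ℕ} [hpp : Fact p.Prime] {S : Type} [Field S] [CharP S p] (y f : S)
    (h : y ^ p - y = f) (r : ℕ) : y ^ (p ^ r) = y + ∑ i ∈ Finset.range r, f ^ (p ^ i) := by
  induction r with
  | zero => simp
  | succ r ih =>
    have h1 : y ^ (p ^ (r + 1)) = (y + f) ^ (p ^ r) := by
      rw [pow_succ', pow_mul, ← h]; congr 1; ring
    rw [h1, add_pow_char_pow, ih, Finset.sum_range_succ]
    ring

theorem kl_count (p : ℕ) [hpp : Fact p.Prime] (hp2 : p ≠ 2) (K : Type) [Field K] [Fintype K]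
    [DecidableEq K]
    [Algebra (ZMod p) K] (n c0 : ZMod p) (hn : n ≠ 0)
    (μ : ℕ) (hμ : 1 ≤ μ) (hK : Fintype.card K = (p ^ μ) ^ 2) :
    p * (Finset.univ.filter (fun u : Kˣ => Algebra.trace (ZMod p) K
        ((u : K) + algebraMap (ZMod p) K n * (u⁻¹ : Kˣ)) = c0)).card ≤
      (p ^ μ) ^ 2 + 10 * p * p ^ μ := by
  classical
  obtain ⟨g, hg0, hgdeg, hg⟩ := kl_aux p hp2 n c0 hn μ hμ
  set L := AlgebraicClosure K
  have : CharP K p := charP_of_injective_algebraMap (algebraMap (ZMod p) K).injective p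
  have : CharP L p := charP_of_injective_algebraMap (algebraMap K L).injective p
  have hp1 := hpp.out.one_lt
  set M := Finset.univ.filter (fun u : Kˣ => Algebra.trace (ZMod p) K
        ((u : K) + algebraMap (ZMod p) K n * (u⁻¹ : Kˣ)) = c0) with hM
  set Z := M.filter (fun u : Kˣ => (u : K) ^ 2 ≠ algebraMap (ZMod p) K n) with hZ
  have hquad : ∀ (S : Finset Kˣ) (t : K) (m : K), 
      (∀ u ∈ S, (u : K) ^ 2 - t * u + m = 0) → S.card ≤ 2 := by
    intro S t m hS
    have hq0 : (X ^ 2 - C t * X + C m : K[X]).natDegree = 2 := by compute_degree!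
    have hq : (X ^ 2 - C t * X + C m : K[X]) ≠ 0 := by
      intro h; rw [h] at hq0; simp at hq0
    have h1 : S.image (fun u : Kˣ => (u : K)) ⊆ (X ^ 2 - C t * X + C m : K[X]).roots.toFinset := by
      intro x hx
      obtain ⟨u, hu, rfl⟩ := Finset.mem_image.mp hx
      rw [Multiset.mem_toFinset, mem_roots hq]
      simpa using hS u hu
    have h2 := Finset.card_le_card h1
    rw [Finset.card_image_of_injective _ Units.val_injective] at h2
    have h3 := Multiset.toFinset_card_le (X ^ 2 - C t * X + C m : K[X]).roots
    have h4 := card_roots' (X ^ 2 - C t * X + C m : K[X])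
    omega
  have hMZ : M.card ≤ Z.card + 2 := by
    have h1 : M.card = Z.card + (M.filter (fun u : Kˣ => ¬ ((u : K) ^ 2 ≠ algebraMap (ZMod p) K n))).card :=
      (Finset.card_filter_add_card_filter_not _).symm
    rw [h1]
    have h2 := hquad (M.filter (fun u : Kˣ => ¬ ((u : K) ^ 2 ≠ algebraMap (ZMod p) K n))) 0
      (-algebraMap (ZMod p) K n) (by
        intro u hu
        have := (Finset.mem_filter.mp hu).2
        push Not at this
        rw [this]; ring)
    omega
  set gL : L[X] := g.map (algebraMap (ZMod p) L) with hgL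
  have hgL0 : gL ≠ 0 := (Polynomial.map_ne_zero_iff (algebraMap (ZMod p) L).injective).mpr hg0
  let f : Kˣ → K := fun u => (u : K) + algebraMap (ZMod p) K n * (u⁻¹ : Kˣ)
  have hdc := Finset.card_mul_le_card_mul (s := Z) (t := gL.roots.toFinset)
    (fun (u : Kˣ) (y : L) => y ^ p - y = algebraMap K L (f u)) (m := p) (n := 2) (by
      intro u hu
      have huM := (Finset.mem_filter.mp (Finset.mem_filter.mp hu).1).2
      have hun := (Finset.mem_filter.mp hu).2
      -- roots of the Artin-Schreier polynomial
      set h : L[X] := X ^ p - X - C (algebraMap K L (f u)) with hh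
      have hdeg : h.natDegree = p := by
        have : h = X ^ p - (X + C (algebraMap K L (f u))) := by rw [hh]; ring
        rw [this]
        rw [natDegree_sub_eq_left_of_natDegree_lt] <;> simp [natDegree_X_add_C, hp1]
      have hne : h ≠ 0 := by intro h0; rw [h0] at hdeg; simp at hdeg; omega
      have hsep : h.Separable := by
        have hder : derivative h = -1 := by
          have hc : ((p : ℕ) : L) = 0 := CharP.cast_eq_zero L p
          rw [hh, derivative_sub, derivative_sub, derivative_X_pow, hc]; simp
        rw [Separable, hder]
        exact isCoprime_one_right.neg_right
      have hnod := nodup_roots hsep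
      have hcard : h.roots.toFinset.card = p := by
        rw [Multiset.toFinset_card_of_nodup hnod, ← hdeg]
        exact (splits_iff_card_roots.mp (IsAlgClosed.splits h))
      refine hcard.symm.le.trans (Finset.card_le_card ?_)
      intro y hy
      rw [Multiset.mem_toFinset, mem_roots hne] at hy
      have hy1 : y ^ p - y = algebraMap K L (f u) := by
        have : y ^ p - y - algebraMap K L (f u) = 0 := by simpa [hh] using hy
        linear_combination this
      rw [Finset.mem_bipartiteAbove]
      refine ⟨?_, hy1⟩
      rw [Multiset.mem_toFinset, mem_roots hgL0, IsRoot, hgL, eval_map_algebraMap]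
      have hmap : ∀ z : ZMod p, algebraMap (ZMod p) L z = algebraMap K L (algebraMap (ZMod p) K z) :=
        fun z => IsScalarTower.algebraMap_apply _ _ _ _
      apply hg L (algebraMap K L u) y
      · simp
      · rw [hmap, ← map_pow]
        exact fun hcon => hun ((algebraMap K L).injective hcon)
      · rw [hy1, hmap]; simp [f]
      · rw [← map_pow, ← hK, FiniteField.pow_card]
      · have hr : (p ^ μ) ^ 2 = p ^ (μ * 2) := by rw [pow_mul]
        rw [hr, kl_pow_trace y _ hy1, hmap, ← huM, FiniteField.algebraMap_trace_eq_sum_pow]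
        have hfr : Module.finrank (ZMod p) K = μ * 2 := by
          have := Module.card_eq_pow_finrank (K := ZMod p) (V := K)
          rw [hK, hr, ZMod.card] at this
          exact (Nat.pow_right_injective hpp.out.two_le this).symm
        rw [hfr, map_sum]
        simp [f]) (by
      intro y hy
      by_cases hemp : (Finset.bipartiteBelow
        (fun (u : Kˣ) (y : L) => y ^ p - y = algebraMap K L (f u)) Z y) = ∅
      · rw [hemp]; simp
      · obtain ⟨v, hv⟩ := Finset.nonempty_iff_ne_empty.mpr hemp
        have hv1 := (Finset.mem_bipartiteBelow _).mp hv
        apply hquad _ (f v) (algebraMap (ZMod p) K n)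
        intro u hu
        have hu1 := (Finset.mem_bipartiteBelow _).mp hu
        have hfu : f u = f v := (algebraMap K L).injective (by rw [← hu1.2, ← hv1.2])
        rw [← hfu]
        simp only [f]
        have : (u : K) * (u⁻¹ : Kˣ) = 1 := by simp
        linear_combination (- algebraMap (ZMod p) K n) * this)
  have h5 : gL.roots.toFinset.card ≤ g.natDegree := by
    refine (Multiset.toFinset_card_le _).trans ((card_roots' _).trans ?_)
    exact natDegree_map_le
  have h6 : 1 ≤ p ^ μ := Nat.one_le_pow _ _ (by omega)
  have h7 : 2 * p ≤ 2 * p * p ^ μ := by nlinarith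
  nlinarith

theorem kl_norm_bound (p : ℕ) [hpp : Fact p.Prime] (hp2 : p ≠ 2) (K : Type) [Field K] [Fintype K]
    [DecidableEq K] [Algebra (ZMod p) K] (n : ZMod p) (hn : n ≠ 0) (ψ : AddChar (ZMod p) ℂ) (hψ : ψ ≠ 1)
    (μ : ℕ) (hμ : 1 ≤ μ) (hK : Fintype.card K = (p ^ μ) ^ 2) :
    ‖∑ u : Kˣ, ψ (Algebra.trace (ZMod p) K ((u : K) + algebraMap (ZMod p) K n * (u⁻¹ : Kˣ)))‖ ≤ 
      21 * p * p ^ μ := by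
  classical
  set τ : Kˣ → ZMod p := fun u => Algebra.trace (ZMod p) K 
    ((u : K) + algebraMap (ZMod p) K n * (u⁻¹ : Kˣ)) with hτ
  set m : ZMod p → ℕ := fun c => (Finset.univ.filter (fun u : Kˣ => τ u = c)).card with hm
  have hmle : ∀ c, p * m c ≤ (p ^ μ) ^ 2 + 10 * p * p ^ μ := fun c => 
    kl_count p hp2 K n c hn μ hμ hK
  have hp0 : (0:ℝ) < p := by exact_mod_cast hpp.out.pos
  have hsum : ∑ c, m c = Fintype.card Kˣ := by
    rw [← Finset.card_univ, Finset.card_eq_sum_card_fiberwise (t := Finset.univ) (f := τ)]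
    intro; simp
  have hcardu : (Fintype.card Kˣ : ℝ) = (p ^ μ : ℝ) ^ 2 - 1 := by
    rw [Fintype.card_units, hK, Nat.cast_sub]
    · push_cast; ring
    · exact Nat.one_le_pow _ _ (Nat.pow_pos hpp.out.pos)
  have hS : ∑ u : Kˣ, ψ (τ u) = ∑ c, (m c : ℂ) * ψ c := by
    rw [← Finset.sum_fiberwise (s := Finset.univ) (g := τ)]
    refine Finset.sum_congr rfl fun c _ => ?_
    rw [Finset.sum_congr rfl (g := fun _ => ψ c)]
    · simp [hm]
    · intro u hu; rw [(Finset.mem_filter.mp hu).2]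
  have hψ0 : ∑ c, ψ c = 0 := AddChar.sum_eq_zero_of_ne_one hψ
  set q : ℝ := (p ^ μ : ℝ) ^ 2 with hq
  have hS2 : (p : ℂ) * ∑ u : Kˣ, ψ (τ u) = ∑ c, ((p * m c - q : ℝ) : ℂ) * ψ c := by
    rw [hS]
    push_cast
    simp only [sub_mul, Finset.sum_sub_distrib, ← Finset.mul_sum, hψ0, mul_assoc]
    simp
  have hz : ∀ c, (p * m c - q : ℝ) ≤ 10 * p * p ^ μ := by
    intro c
    have : ((p * m c : ℕ) : ℝ) ≤ (((p ^ μ) ^ 2 + 10 * p * p ^ μ : ℕ) : ℝ) := by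
      exact_mod_cast hmle c
    push_cast at this
    rw [hq]; linarith
  have hpμ : (1:ℝ) ≤ p ^ μ := one_le_pow₀ (by exact_mod_cast hpp.out.one_lt.le)
  have hbound : (p : ℝ) * ‖∑ u : Kˣ, ψ (τ u)‖ ≤ p * (21 * p * p ^ μ) := by
    calc (p : ℝ) * ‖∑ u : Kˣ, ψ (τ u)‖ = ‖(p : ℂ) * ∑ u : Kˣ, ψ (τ u)‖ := by
          rw [norm_mul]; simp
      _ ≤ ∑ c, ‖((p * m c - q : ℝ) : ℂ) * ψ c‖ := by rw [hS2]; exact norm_sum_le _ _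
      _ = ∑ c, |p * m c - q| := by
          refine Finset.sum_congr rfl fun c _ => ?_
          rw [norm_mul, AddChar.norm_apply, mul_one, Complex.norm_real, Real.norm_eq_abs]
      _ ≤ ∑ c, (20 * p * p ^ μ - (p * m c - q)) := by
          refine Finset.sum_le_sum fun c _ => ?_
          have := hz c
          rw [abs_le]
          constructor
          · have : (0:ℝ) ≤ 20 * p * p ^ μ := by positivity
            linarith
          · linarith
      _ = 20 * p * p ^ μ * p + p := by
          rw [Finset.sum_sub_distrib, Finset.sum_sub_distrib, ← Finset.mul_sum (f := fun c => (m c : ℝ))]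
          have : (∑ c, (m c : ℝ)) = q - 1 := by
            rw [← hcardu, ← hsum]; push_cast; rfl
          rw [this]
          simp [ZMod.card]
          ring
      _ ≤ p * (21 * p * p ^ μ) := by
          have : (1:ℝ) ≤ p := by exact_mod_cast hpp.out.one_lt.le
          have h2 : (1:ℝ) ≤ p * p ^ μ := by nlinarith
          nlinarith
  exact le_of_mul_le_mul_left hbound hp0

end

section

open Polynomial
theorem kl_sum_units {K : Type} [Field K] [Fintype K] [DecidableEq K] (F : K → ℂ) :
    ∑ u : Kˣ, F (u : K) = ∑ x : K, if x = 0 then 0 else F x := by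
  classical
  have h0 : ∀ x : K, (if x = 0 then 0 else F x) = if x ≠ 0 then F x else 0 := by
    intro x; rw [ite_not]
  rw [Finset.sum_congr rfl fun x _ => h0 x, ← Finset.sum_filter]
  refine Finset.sum_bij' (fun u _ => (u : K)) (fun x hx => Units.mk0 x (Finset.mem_filter.mp hx).2) ?_ ?_ ?_ ?_ ?_
  all_goals simp

theorem kl_sq_sum {k : Type} [Field k] [Fintype k] [DecidableEq k] (h2 : ringChar k ≠ 2) (d : k)
    (hd : ¬ IsSquare d) (g : k → ℂ) :
    ∑ b, g (b ^ 2) + ∑ b, g (d * b ^ 2) = 2 * ∑ D, g D := by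
  classical
  have hd0 : d ≠ 0 := by rintro rfl; exact hd (IsSquare.zero)
  have hχd : quadraticChar k d = -1 := quadraticChar_neg_one_iff_not_isSquare.mpr hd
  have key : ∀ f : k → k, ∑ b, g (f b) = ∑ D, ((Finset.univ.filter (fun b => f b = D)).card : ℂ) * g D := by
    intro f
    rw [← Finset.sum_fiberwise (s := Finset.univ) (g := f)]
    refine Finset.sum_congr rfl fun D _ => ?_
    rw [Finset.sum_congr rfl (g := fun _ => g D)]
    · simp
    · intro u hu; rw [(Finset.mem_filter.mp hu).2]
  have hc1 : ∀ D : k, (((Finset.univ.filter (fun b : k => b ^ 2 = D)).card : ℤ)) = quadraticChar k D + 1 := by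
    intro D
    rw [← quadraticChar_card_sqrts h2]
    congr 2; ext; simp
  have hc2 : ∀ D : k, (((Finset.univ.filter (fun b : k => d * b ^ 2 = D)).card : ℤ)) = -quadraticChar k D + 1 := by
    intro D
    have : (Finset.univ.filter (fun b : k => d * b ^ 2 = D)) = (Finset.univ.filter (fun b : k => b ^ 2 = D / d)) := by
      ext b; simp only [Finset.mem_filter, Finset.mem_univ, true_and]
      rw [eq_div_iff hd0, mul_comm]
    rw [this, hc1]
    have : quadraticChar k D = quadraticChar k (D / d) * quadraticChar k d := by
      rw [← map_mul, div_mul_cancel₀ _ hd0]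
    rw [this, hχd]; ring
  rw [key, key, ← Finset.sum_add_distrib, Finset.mul_sum]
  refine Finset.sum_congr rfl fun D _ => ?_
  rw [← add_mul]
  congr 1
  have := hc1 D
  have h' := hc2 D
  have h3 : ((Finset.univ.filter (fun b : k => b ^ 2 = D)).card : ℤ) + ((Finset.univ.filter (fun b : k => d * b ^ 2 = D)).card : ℤ) = 2 := by
    rw [this, h']; ring
  exact_mod_cast h3

theorem kl_two_q {k : Type} [Field k] [Fintype k] [DecidableEq k] (h2 : ringChar k ≠ 2) (d n : k)
    (hd : ¬ IsSquare d) (hn : n ≠ 0) (φ : AddChar k ℂ) (hφ : φ ≠ 1) :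
    (∑ a : k, ∑ b : k, if a ^ 2 - b ^ 2 = 0 then 0 else φ (2 * a + 2 * a * n / (a ^ 2 - b ^ 2))) +
    (∑ a : k, ∑ b : k, if a ^ 2 - d * b ^ 2 = 0 then 0 else φ (2 * a + 2 * a * n / (a ^ 2 - d * b ^ 2)))
     = 2 * Fintype.card k := by
  have h20 : (2 : k) ≠ 0 := Ring.two_ne_zero h2
  rw [← Finset.sum_add_distrib]
  have h1 : ∀ a : k, (∑ b : k, if a ^ 2 - b ^ 2 = 0 then 0 else φ (2 * a + 2 * a * n / (a ^ 2 - b ^ 2))) + 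
    (∑ b : k, if a ^ 2 - d * b ^ 2 = 0 then 0 else φ (2 * a + 2 * a * n / (a ^ 2 - d * b ^ 2))) =
     2 * ∑ N : k, if N = 0 then 0 else φ (a * (2 * (1 + n / N))) := by
    intro a
    rw [kl_sq_sum h2 d hd (fun D => if a ^ 2 - D = 0 then 0 else φ (2 * a + 2 * a * n / (a ^ 2 - D)))]
    congr 1
    refine Fintype.sum_equiv (Equiv.subLeft (a ^ 2)) _ _ ?_
    intro D
    simp only [Equiv.subLeft_apply]
    split_ifs
    · rfl
    · congr 1; ring
  rw [Finset.sum_congr rfl fun a _ => h1 a, ← Finset.mul_sum, Finset.sum_comm]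
  congr 1
  have h3 : ∀ N : k, (∑ a : k, if N = 0 then 0 else φ (a * (2 * (1 + n / N)))) = if N = -n then (Fintype.card k : ℂ) else 0 := by
    intro N
    by_cases hN : N = 0
    · subst hN; simp [eq_comm, hn]
    · simp only [hN, if_false]
      rw [AddChar.sum_mulShift _ (AddChar.IsPrimitive.of_ne_one hφ)]
      have : 2 * (1 + n / N) = 0 ↔ N = -n := by
        rw [mul_eq_zero, or_iff_right h20]
        constructor
        · intro h; field_simp at h; linear_combination h
        · rintro rfl; field_simp; ring
      simp only [this]
      split_ifs <;> simp
  rw [Finset.sum_congr rfl fun N _ => h3 N]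
  simp

end

section

open Polynomial
theorem kl_quad_trace {k : Type} [Field k] (d : k) (z : QuadraticAlgebra k d 0) :
    Algebra.trace k (QuadraticAlgebra k d 0) z = 2 * z.re := by
  rw [Algebra.trace_eq_matrix_trace (QuadraticAlgebra.basis d 0), Matrix.trace, Fin.sum_univ_two]
  have hb0 : (QuadraticAlgebra.basis d 0) 0 = (⟨1, 0⟩ : QuadraticAlgebra k d 0) := by
    rw [QuadraticAlgebra.basis, Module.Basis.coe_ofEquivFun]; ext <;> simp
  have hb1 : (QuadraticAlgebra.basis d 0) 1 = (⟨0, 1⟩ : QuadraticAlgebra k d 0) := by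
    rw [QuadraticAlgebra.basis, Module.Basis.coe_ofEquivFun]; ext <;> simp
  simp [Matrix.diag, Algebra.leftMulMatrix_apply, LinearMap.toMatrix_apply, hb0, hb1]
  ring

theorem kl_quad_ext (p : ℕ) [hpp : Fact p.Prime] (hp2 : p ≠ 2) (k : Type) [Field k] [Fintype k]
    [Algebra (ZMod p) k] (n : ZMod p) (hn : n ≠ 0) (ψ : AddChar (ZMod p) ℂ) (hψ : ψ ≠ 1) :
    ∃ (K : Type) (_ : Field K) (_ : Fintype K) (_ : Algebra (ZMod p) K),
      Fintype.card K = (Fintype.card k) ^ 2 ∧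
      ∑ᶠ u : Kˣ, ψ (Algebra.trace (ZMod p) K ((u : K) + algebraMap (ZMod p) K n * (u⁻¹ : Kˣ))) = 
        2 * (Fintype.card k : ℂ) - 
        (∑ᶠ u : kˣ, ψ (Algebra.trace (ZMod p) k ((u : k) + algebraMap (ZMod p) k n * (u⁻¹ : kˣ)))) ^ 2 := by
  classical
  have : CharP k p := charP_of_injective_algebraMap (algebraMap (ZMod p) k).injective p
  have h2 : ringChar k ≠ 2 := by rw [ringChar.eq k p]; exact hp2
  have h20 : (2 : k) ≠ 0 := Ring.two_ne_zero h2
  obtain ⟨d, hd⟩ := FiniteField.exists_nonsquare h2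
  have : Fact (∀ r : k, r ^ 2 ≠ d + 0 * r) := ⟨fun r h => hd ⟨r, by rw [← pow_two, h]; ring⟩⟩
  let fK : Fintype (QuadraticAlgebra k d 0) := Fintype.ofEquiv _ (QuadraticAlgebra.equivProd d 0).symm
  refine ⟨QuadraticAlgebra k d 0, inferInstance, fK, inferInstance, ?_, ?_⟩
  · rw [Fintype.card_congr (QuadraticAlgebra.equivProd d 0), Fintype.card_prod, pow_two]
  rw [finsum_eq_sum_of_fintype, finsum_eq_sum_of_fintype]
  set φ : AddChar k ℂ := ψ.compAddMonoidHom (Algebra.trace (ZMod p) k).toAddMonoidHom with hφ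
  have hφa : ∀ x, φ x = ψ (Algebra.trace (ZMod p) k x) := fun x => rfl
  have hφ1 : φ ≠ 1 := by
    intro h
    apply hψ
    ext x
    obtain ⟨y, rfl⟩ := Algebra.trace_surjective (ZMod p) k x
    rw [← hφa, h]; rfl
  set N := algebraMap (ZMod p) k n with hN
  have hN0 : N ≠ 0 := by simpa [hN] using hn
  have key := kl_two_q h2 d N hd hN0 φ hφ1
  have e1 : ∑ u : (QuadraticAlgebra k d 0)ˣ, ψ (Algebra.trace (ZMod p) (QuadraticAlgebra k d 0) 
     ((u : QuadraticAlgebra k d 0) + algebraMap (ZMod p) (QuadraticAlgebra k d 0) n * (u⁻¹ : (QuadraticAlgebra k d 0)ˣ))) = 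
     (∑ a : k, ∑ b : k, if a ^ 2 - d * b ^ 2 = 0 then 0 else φ (2 * a + 2 * a * N / (a ^ 2 - d * b ^ 2))) := by
    simp only [Units.val_inv_eq_inv_val]
    rw [kl_sum_units (fun u => ψ (Algebra.trace (ZMod p) (QuadraticAlgebra k d 0) 
     (u + algebraMap (ZMod p) (QuadraticAlgebra k d 0) n * u⁻¹)))]
    rw [← Fintype.sum_prod_type']
    refine Fintype.sum_equiv (QuadraticAlgebra.equivProd d 0) _ _ ?_
    intro z
    have hz : z = 0 ↔ z.re ^ 2 - d * z.im ^ 2 = 0 := by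
      rw [← QuadraticAlgebra.norm_eq_zero_iff_eq_zero, QuadraticAlgebra.norm_def]
      ring_nf
    have hz1 : QuadraticAlgebra.equivProd d 0 z = (z.re, z.im) := rfl
    simp only [hz1, hz]
    split_ifs with h
    · rfl
    rw [hφa, ← Algebra.trace_trace (S := k), kl_quad_trace]
    congr 2
    have ha : algebraMap (ZMod p) (QuadraticAlgebra k d 0) n = algebraMap k _ N := 
      IsScalarTower.algebraMap_apply _ _ _ _
    rw [ha, ← Algebra.smul_def]
    simp [QuadraticAlgebra.norm_def]
    field_simp
  have e2 : (∑ u : kˣ, ψ (Algebra.trace (ZMod p) k ((u : k) + N * (u⁻¹ : kˣ)))) ^ 2 = 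
     (∑ a : k, ∑ b : k, if a ^ 2 - b ^ 2 = 0 then 0 else φ (2 * a + 2 * a * N / (a ^ 2 - b ^ 2))) := by
    simp only [Units.val_inv_eq_inv_val, ← hφa]
    rw [kl_sum_units (fun u => φ (u + N * u⁻¹)), pow_two, Finset.sum_mul_sum, ← Fintype.sum_prod_type', ← Fintype.sum_prod_type']
    symm
    refine Fintype.sum_equiv ⟨fun z => (z.1 + z.2, z.1 - z.2), fun z => ((z.1 + z.2) / 2, (z.1 - z.2) / 2), ?_, ?_⟩ _ _ ?_
    · intro z; ext <;> simp <;> field_simp <;> ring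
    · intro z; ext <;> simp <;> field_simp <;> ring
    rintro ⟨a, b⟩
    simp only [Equiv.coe_fn_mk]
    have hab : a ^ 2 - b ^ 2 = (a + b) * (a - b) := by ring
    by_cases h1 : a + b = 0
    · simp [hab, h1]
    by_cases h2 : a - b = 0
    · simp [hab, h2]
    simp only [hab, mul_eq_zero, h1, h2, or_self, if_false]
    rw [← AddChar.map_add_eq_mul]
    congr 1
    field_simp
    ring
  rw [e1, e2, ← key]; ring

end

section

open Polynomial
theorem kl_tower (p : ℕ) [hpp : Fact p.Prime] (hp2 : p ≠ 2) (n : ZMod p) (hn : n ≠ 0)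
    (ψ : AddChar (ZMod p) ℂ) (hψ : ψ ≠ 1) (δ : ℝ) (hδ : 0 ≤ δ)
    (h0 : (2 + δ) * Real.sqrt p ≤ ‖∑ᶠ u : (ZMod p)ˣ, ψ ((u : ZMod p) + n * (u⁻¹ : (ZMod p)ˣ))‖) (j : ℕ) :
    ∃ (K : Type) (_ : Field K) (_ : Fintype K) (_ : Algebra (ZMod p) K),
      Fintype.card K = p ^ (2 ^ j) ∧
      (2 + 4 ^ j * δ) * (Real.sqrt p) ^ (2 ^ j) ≤ 
        ‖∑ᶠ u : Kˣ, ψ (Algebra.trace (ZMod p) K ((u : K) + algebraMap (ZMod p) K n * (u⁻¹ : Kˣ)))‖ := by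
  induction j with
  | zero =>
    refine ⟨ZMod p, inferInstance, inferInstance, inferInstance, by simp [ZMod.card], ?_⟩
    simp only [Algebra.trace_self_apply, Algebra.algebraMap_self, RingHom.id_apply, pow_zero, one_mul, pow_one]
    exact h0
  | succ j ih =>
    obtain ⟨k, _, _, _, hc, hS⟩ := ih
    obtain ⟨K, _, _, _, hc', hS'⟩ := kl_quad_ext p hp2 k n hn ψ hψ
    refine ⟨K, inferInstance, inferInstance, inferInstance, by rw [hc', hc, ← pow_mul, pow_succ], ?_⟩
    rw [hS']
    set S := ∑ᶠ u : kˣ, ψ (Algebra.trace (ZMod p) k ((u : k) + algebraMap (ZMod p) k n * (u⁻¹ : kˣ)))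
    have h1 : ‖S‖ ^ 2 - 2 * (Fintype.card k : ℝ) ≤ ‖2 * (Fintype.card k : ℂ) - S ^ 2‖ := by
      have := norm_sub_norm_le (S ^ 2) (2 * (Fintype.card k : ℂ))
      rw [norm_sub_rev] at this
      simpa using this
    refine le_trans ?_ h1
    set r := (Real.sqrt p) ^ (2 ^ j) with hr
    have hr0 : 0 ≤ r := by positivity
    have h2 : (Fintype.card k : ℝ) = r ^ 2 := by
      rw [hc, hr, ← pow_mul, mul_comm, pow_mul, Real.sq_sqrt (by positivity)]; simp
    have h3 : (Real.sqrt p) ^ (2 ^ (j + 1)) = r ^ 2 := by rw [pow_succ, pow_mul]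
    rw [h2, h3]
    set x := 4 ^ j * δ with hx
    have hx0 : 0 ≤ x := by positivity
    have h4 : 4 ^ (j + 1) * δ = 4 * x := by rw [hx]; ring
    rw [h4]
    have h5 : ((2 + x) * r) ^ 2 ≤ ‖S‖ ^ 2 := pow_le_pow_left₀ (by positivity) hS 2
    nlinarith [sq_nonneg (x * r)]

theorem kl_weil_one (p : ℕ) [hpp : Fact p.Prime] (hp2 : p ≠ 2) (n : ZMod p) (hn : n ≠ 0)
    (ψ : AddChar (ZMod p) ℂ) (hψ : ψ ≠ 1) :
    ‖∑ u : (ZMod p)ˣ, ψ ((u : ZMod p) + n * (u⁻¹ : (ZMod p)ˣ))‖ ≤ 2 * Real.sqrt p := by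
  classical
  by_contra hcon
  push Not at hcon
  rw [← finsum_eq_sum_of_fintype] at hcon
  have hp0 : (0:ℝ) < p := by exact_mod_cast hpp.out.pos
  have hs : 0 < Real.sqrt p := Real.sqrt_pos.mpr hp0
  set S := ‖∑ᶠ u : (ZMod p)ˣ, ψ ((u : ZMod p) + n * (u⁻¹ : (ZMod p)ˣ))‖ with hS
  set δ := S / Real.sqrt p - 2 with hδ
  have hδ0 : 0 < δ := by
    rw [hδ, sub_pos, lt_div_iff₀ hs]; exact hcon
  have h0 : (2 + δ) * Real.sqrt p ≤ S := by
    rw [hδ]; field_simp; linarith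
  obtain ⟨j, hj⟩ := pow_unbounded_of_one_lt (21 * p / δ) (by norm_num : (1:ℝ) < 4)
  obtain ⟨K, _, _, _, hc, hb⟩ := kl_tower p hp2 n hn ψ hψ δ hδ0.le h0 (j + 1)
  have hb2 := kl_norm_bound p hp2 K n hn ψ hψ (2 ^ j) (Nat.one_le_two_pow) (by rw [hc, ← pow_mul, pow_succ])
  rw [← finsum_eq_sum_of_fintype] at hb2
  have h3 : (Real.sqrt p) ^ (2 ^ (j + 1)) = (p : ℝ) ^ (2 ^ j) := by
    rw [pow_succ, mul_comm, pow_mul, Real.sq_sqrt hp0.le]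
  rw [h3] at hb
  have h4 := le_of_mul_le_mul_right (hb.trans hb2) (by positivity)
  rw [div_lt_iff₀ hδ0] at hj
  have : (4:ℝ) ^ (j + 1) = 4 * 4 ^ j := by ring
  rw [this] at h4
  have : 0 < (4:ℝ) ^ j * δ := by positivity
  nlinarith

theorem kl_weil_prime (p : ℕ) [hpp : Fact p.Prime] (hp2 : p ≠ 2) (m n : ZMod p) (hm : m ≠ 0) (hn : n ≠ 0)
    (ψ : AddChar (ZMod p) ℂ) (hψ : ψ ≠ 1) :
    ‖∑ u : (ZMod p)ˣ, ψ (m * (u : ZMod p) + n * (u⁻¹ : (ZMod p)ˣ))‖ ≤ 2 * Real.sqrt p := by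
  have h := kl_weil_one p hp2 (m * n) (mul_ne_zero hm hn) ψ hψ
  convert h using 2
  refine Fintype.sum_equiv (Equiv.mulLeft (Units.mk0 m hm)) _ _ ?_
  intro u
  simp only [Equiv.coe_mulLeft, mul_inv_rev, Units.val_mul, Units.val_mk0, Units.val_inv_eq_inv_val]
  congr 2
  field_simp

end

section

/-- Kloosterman sum over a finite ring. -/
noncomputable def klR {R : Type} [CommRing R] [Fintype Rˣ] (ψ : AddChar R ℂ) (m n : R) : ℂ :=
  ∑ u : Rˣ, ψ (m * (u : R) + n * (u⁻¹ : Rˣ))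

theorem klR_avg {R : Type} [CommRing R] [Fintype R] [Fintype Rˣ] [DecidableEq R] (ψ : AddChar R ℂ)
    (hψ : ψ.IsPrimitive) (m n P : R) (hP : P * P = 0) :
    klR ψ m n = ∑ u : Rˣ, if P * (m * (u : R) - n * (u⁻¹ : Rˣ)) = 0 then
      ψ (m * (u : R) + n * (u⁻¹ : Rˣ)) else 0 := by
  have hne : (Fintype.card R : ℂ) ≠ 0 := by simp
  apply mul_left_cancel₀ hne
  let w : R → Rˣ := fun t => ⟨1 + P * t, 1 - P * t, by linear_combination (- t ^ 2) * hP,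
    by linear_combination (- t ^ 2) * hP⟩
  have h1 : ∀ t : R, klR ψ m n = ∑ u : Rˣ, ψ (m * (u : R) + n * (u⁻¹ : Rˣ)) *
      ψ (t * (P * (m * (u : R) - n * (u⁻¹ : Rˣ)))) := by
    intro t
    rw [klR]
    symm
    refine Fintype.sum_equiv (Equiv.mulRight (w t)) _ _ ?_
    intro u
    rw [← AddChar.map_add_eq_mul]
    congr 1
    simp only [Equiv.coe_mulRight, mul_inv_rev, Units.val_mul]
    have : ((w t)⁻¹ : Rˣ) = (1 - P * t : R) := rfl
    rw [this]
    have : ((w t) : R) = (1 + P * t : R) := rfl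
    rw [this]
    ring
  have h2 : (Fintype.card R : ℂ) * klR ψ m n = ∑ t : R, klR ψ m n := by simp
  rw [h2, Finset.sum_congr rfl fun t _ => h1 t, Finset.sum_comm, Finset.mul_sum]
  refine Finset.sum_congr rfl fun u _ => ?_
  rw [← Finset.mul_sum, AddChar.sum_mulShift _ hψ]
  split_ifs <;> simp [mul_comm]

theorem klR_gauss {R : Type} [CommRing R] [Fintype R] [DecidableEq R] (ψ : AddChar R ℂ)
    (hψ : ψ.IsPrimitive) (A B : R) (s : Finset R) (hs : ∀ x, 2 * B * x = 0 → x ∈ s) :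
    ‖∑ t : R, ψ (A * t + B * t ^ 2)‖ ^ 2 ≤ Fintype.card R * s.card := by
  set G := ∑ t : R, ψ (A * t + B * t ^ 2) with hG
  have h1 : G * (starRingEnd ℂ) G = ∑ x : R, ψ (A * x + B * x ^ 2) * 
      ((if 2 * B * x = 0 then Fintype.card R else 0 : ℕ) : ℂ) := by
    rw [hG, map_sum, Finset.sum_mul_sum, Finset.sum_comm]
    have h2 : ∀ y : R, ∑ t : R, ψ (A * t + B * t ^ 2) * (starRingEnd ℂ) (ψ (A * y + B * y ^ 2)) =
      ∑ x : R, ψ (A * x + B * x ^ 2) * ψ (y * (2 * B * x)) := by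
      intro y
      refine Fintype.sum_equiv (Equiv.subRight y) _ _ ?_
      intro t
      rw [← AddChar.map_neg_eq_conj, ← AddChar.map_add_eq_mul, ← AddChar.map_add_eq_mul]
      congr 1
      simp only [Equiv.subRight_apply]
      ring
    rw [Finset.sum_congr rfl fun y _ => h2 y, Finset.sum_comm]
    refine Finset.sum_congr rfl fun x _ => ?_
    rw [← Finset.mul_sum, AddChar.sum_mulShift _ hψ]
  have h3 : ‖G‖ ^ 2 = ‖G * (starRingEnd ℂ) G‖ := by simp [pow_two]
  rw [h3, h1]
  refine (norm_sum_le _ _).trans ?_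
  have h4 : ∀ x ∈ (Finset.univ : Finset R), ‖ψ (A * x + B * x ^ 2) * 
      ((if 2 * B * x = 0 then Fintype.card R else 0 : ℕ) : ℂ)‖ ≤ 
      if x ∈ s then (Fintype.card R : ℝ) else 0 := by
    intro x _
    rw [norm_mul, AddChar.norm_apply, one_mul]
    by_cases h : 2 * B * x = 0
    · simp [h, hs x h]
    · simp only [h, if_false]
      simp
      split_ifs <;> simp
  refine (Finset.sum_le_sum h4).trans ?_
  simp [mul_comm]

theorem klR_avg2 {R : Type} [CommRing R] [Fintype R] [Fintype Rˣ] [DecidableEq R] (ψ : AddChar R ℂ)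
    (hψ : ψ.IsPrimitive) (m n P Q : R) (hP : P * P = 0) (hPQ : P * Q = 0) (hQ : Q * Q * Q = 0)
    (h2 : IsUnit (2 : R)) (hn : IsUnit n) (s : Finset R) (hs : ∀ x, Q * Q * x = 0 → x ∈ s) :
    Fintype.card R * ‖klR ψ m n‖ ≤ 
      (Finset.univ.filter (fun u : Rˣ => P * (m * (u : R) - n * (u⁻¹ : Rˣ)) = 0)).card *
       Real.sqrt (Fintype.card R * s.card) := by
  let w : R → Rˣ := fun t => ⟨1 + Q * t, 1 - Q * t + Q ^ 2 * t ^ 2, by linear_combination (t ^ 3) * hQ,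
    by linear_combination (t ^ 3) * hQ⟩
  have h1 : ∀ t : R, klR ψ m n = ∑ u : Rˣ, if P * (m * (u : R) - n * (u⁻¹ : Rˣ)) = 0 then
      ψ (m * (u : R) + n * (u⁻¹ : Rˣ)) *
      ψ (Q * (m * (u : R) - n * (u⁻¹ : Rˣ)) * t + (Q * Q * (n * (u⁻¹ : Rˣ))) * t ^ 2) else 0 := by
    intro t
    rw [klR_avg ψ hψ m n P hP]
    symm
    refine Fintype.sum_equiv (Equiv.mulRight (w t)) _ _ ?_
    intro u
    rw [← AddChar.map_add_eq_mul]
    simp only [Equiv.coe_mulRight, mul_inv_rev, Units.val_mul]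
    have e1 : ((w t)⁻¹ : Rˣ) = (1 - Q * t + Q ^ 2 * t ^ 2 : R) := rfl
    have e2 : ((w t) : R) = (1 + Q * t : R) := rfl
    rw [e1, e2]
    have e3 : P * (m * (u * (1 + Q * t)) - n * ((1 - Q * t + Q ^ 2 * t ^ 2) * (u⁻¹ : Rˣ))) = 
       P * (m * u - n * (u⁻¹ : Rˣ)) := by
      linear_combination (m * u * t + n * t * (u⁻¹ : Rˣ) - n * (u⁻¹ : Rˣ) * Q * t ^ 2) * hPQ
    rw [e3]
    congr 2
    ring
  have h3 : (Fintype.card R : ℂ) * klR ψ m n = ∑ t : R, klR ψ m n := by simp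
  have h4 : (Fintype.card R : ℂ) * klR ψ m n = ∑ u : Rˣ, if P * (m * (u : R) - n * (u⁻¹ : Rˣ)) = 0 then
      ψ (m * (u : R) + n * (u⁻¹ : Rˣ)) *
      ∑ t, ψ (Q * (m * (u : R) - n * (u⁻¹ : Rˣ)) * t + (Q * Q * (n * (u⁻¹ : Rˣ))) * t ^ 2) else 0 := by
    rw [h3, Finset.sum_congr rfl fun t _ => h1 t, Finset.sum_comm]
    refine Finset.sum_congr rfl fun u _ => ?_
    split_ifs
    · rw [Finset.mul_sum]
    · simp
  have h5 : Fintype.card R * ‖klR ψ m n‖ = ‖(Fintype.card R : ℂ) * klR ψ m n‖ := by simp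
  rw [h5, h4, ← Finset.sum_filter]
  refine (norm_sum_le _ _).trans ?_
  rw [← nsmul_eq_mul]
  refine Finset.sum_le_card_nsmul _ _ _ ?_
  intro u hu
  rw [norm_mul, AddChar.norm_apply, one_mul]
  apply Real.le_sqrt_of_sq_le
  apply klR_gauss ψ hψ
  intro x hx
  apply hs
  have hun : IsUnit (2 * n * ((u⁻¹ : Rˣ) : R)) := (h2.mul hn).mul (Units.isUnit _)
  apply hun.mul_left_cancel
  linear_combination hx

end

section

theorem kl_ann (N : ℕ) [NeZero N] (a : ℕ) (ha : 0 < a) :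
    (Finset.univ.filter (fun x : ZMod N => (a : ZMod N) * x = 0)).card ≤ a := by
  have := IsAddCyclic.card_nsmul_eq_zero_le (α := ZMod N) ha
  simpa [nsmul_eq_mul] using this

theorem kl_Z_aux {R : Type} [CommRing R] [Fintype R] [Fintype Rˣ] [DecidableEq R] 
    (Z : Finset Rˣ) (s : Finset R)
    (h : ∀ u ∈ Z, ∀ v ∈ Z, (v - u : R) ∈ s ∨ (v + u : R) ∈ s) : Z.card ≤ 2 * s.card := by
  classical
  rcases Z.eq_empty_or_nonempty with h0 | ⟨u, hu⟩
  · simp [h0]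
  have h1 : Z.image (fun v : Rˣ => (v : R)) ⊆ s.image (fun x => x + u) ∪ s.image (fun x => x - u) := by
    intro x hx
    obtain ⟨v, hv, rfl⟩ := Finset.mem_image.mp hx
    rw [Finset.mem_union, Finset.mem_image, Finset.mem_image]
    rcases h u hu v hv with h | h
    · left; exact ⟨_, h, by ring⟩
    · right; exact ⟨_, h, by ring⟩
  have h2 := Finset.card_le_card h1
  rw [Finset.card_image_of_injective _ Units.val_injective] at h2
  have h3 := Finset.card_union_le (s.image (fun x => x + (u:R))) (s.image (fun x => x - (u:R)))
  have h4 := Finset.card_image_le (s := s) (f := fun x => x + (u:R))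
  have h5 := Finset.card_image_le (s := s) (f := fun x => x - (u:R))
  omega

theorem kl_Z_rel {R : Type} [CommRing R] (m n P : R) (hm : IsUnit m) (u v : Rˣ)
    (hu : P * (m * (u : R) - n * (u⁻¹ : Rˣ)) = 0) (hv : P * (m * (v : R) - n * (v⁻¹ : Rˣ)) = 0) :
    P * ((v - u) * (v + u)) = (0 : R) := by
  apply hm.mul_left_cancel
  have h1 : (u : R) * (u⁻¹ : Rˣ) = 1 := by simp
  have h2 : (v : R) * (v⁻¹ : Rˣ) = 1 := by simp
  linear_combination (v : R) * hv - (u : R) * hu + P * n * h2 - P * n * h1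

theorem kl_Z_odd {R : Type} [CommRing R] [IsLocalRing R] [Fintype R] [Fintype Rˣ] [DecidableEq R]
    (m n P : R) (hm : IsUnit m) (h2 : IsUnit (2 : R)) (s : Finset R) (hs : ∀ x, P * x = 0 → x ∈ s) :
    (Finset.univ.filter (fun u : Rˣ => P * (m * (u : R) - n * (u⁻¹ : Rˣ)) = 0)).card ≤ 2 * s.card := by
  apply kl_Z_aux
  intro u hu v hv
  have h := kl_Z_rel m n P hm u v (Finset.mem_filter.mp hu).2 (Finset.mem_filter.mp hv).2
  have h3 : IsUnit ((v + u : R) + (-(v - u))) := by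
    have : ((v + u : R) + (-(v - u))) = 2 * u := by ring
    rw [this]; exact h2.mul u.isUnit
  rcases IsLocalRing.isUnit_or_isUnit_of_isUnit_add h3 with h4 | h4
  · left; apply hs; apply h4.mul_left_cancel; linear_combination h
  · right; apply hs; apply h4.mul_left_cancel; linear_combination -h

theorem kl_Z_two {R : Type} [CommRing R] [IsLocalRing R] [Fintype R] [Fintype Rˣ] [DecidableEq R]
    (m n P : R) (hm : IsUnit m) (h2 : ∀ u v : Rˣ, ∃ x : R, (v - u : R) = 2 * x)
    (s : Finset R) (hs : ∀ x, 2 * P * x = 0 → x ∈ s) :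
    (Finset.univ.filter (fun u : Rˣ => P * (m * (u : R) - n * (u⁻¹ : Rˣ)) = 0)).card ≤ 2 * s.card := by
  apply kl_Z_aux
  intro u hu v hv
  have h := kl_Z_rel m n P hm u v (Finset.mem_filter.mp hu).2 (Finset.mem_filter.mp hv).2
  obtain ⟨x, hx⟩ := h2 u v
  have hx' : (v + u : R) = 2 * (x + u) := by linear_combination hx
  have h3 : IsUnit ((x + u : R) + (-x)) := by
    have : (x + u : R) + (-x) = u := by ring
    rw [this]; exact u.isUnit
  rcases IsLocalRing.isUnit_or_isUnit_of_isUnit_add h3 with h4 | h4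
  · left; apply hs; apply h4.mul_left_cancel; rw [hx'] at h; linear_combination h
  · right; apply hs; apply h4.mul_left_cancel; rw [hx] at h; linear_combination -h

theorem kl_unit_iff (p k : ℕ) [hpp : Fact p.Prime] (hk : k ≠ 0) (a : ℤ) :
    IsUnit (a : ZMod (p ^ k)) ↔ ¬ (p : ℤ) ∣ a := by
  rw [ZMod.coe_int_isUnit_iff_isCoprime]
  push_cast
  rw [IsCoprime.pow_left_iff (Nat.pos_of_ne_zero hk)]
  exact (Nat.prime_iff_prime_int.mp hpp.out).coprime_iff_not_dvd

theorem kl_local (p k : ℕ) [hpp : Fact p.Prime] (hk : k ≠ 0) : IsLocalRing (ZMod (p ^ k)) := by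
  have : Fact (1 < p ^ k) := ⟨Nat.one_lt_pow hk hpp.out.one_lt⟩
  refine IsLocalRing.of_nonunits_add ?_
  intro x y hx hy
  obtain ⟨a, rfl⟩ := ZMod.intCast_surjective x
  obtain ⟨b, rfl⟩ := ZMod.intCast_surjective y
  rw [mem_nonunits_iff, kl_unit_iff p k hk, not_not] at hx hy
  rw [mem_nonunits_iff, ← Int.cast_add, kl_unit_iff p k hk, not_not]
  exact dvd_add hx hy

theorem klR_norm_le_Z {R : Type} [CommRing R] [Fintype R] [Fintype Rˣ] [DecidableEq R] (ψ : AddChar R ℂ)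
    (hψ : ψ.IsPrimitive) (m n P : R) (hP : P * P = 0) :
    ‖klR ψ m n‖ ≤ (Finset.univ.filter (fun u : Rˣ => P * (m * (u : R) - n * (u⁻¹ : Rˣ)) = 0)).card := by
  rw [klR_avg ψ hψ m n P hP, ← Finset.sum_filter]
  refine (norm_sum_le _ _).trans ?_
  simp

theorem klR_norm_le_card {R : Type} [CommRing R] [Fintype Rˣ] [Finite R] (ψ : AddChar R ℂ) (m n : R) :
    ‖klR ψ m n‖ ≤ Fintype.card Rˣ := by
  refine (norm_sum_le _ _).trans ?_
  simp

theorem kl_pp_one (p k : ℕ) [hpp : Fact p.Prime] [NeZero (p ^ k)] (hk : 2 ≤ k) (m n : ℤ)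
    (h : ((p : ℤ) ∣ m ∧ ¬ (p : ℤ) ∣ n) ∨ (¬ (p : ℤ) ∣ m ∧ (p : ℤ) ∣ n)) :
    klR (ZMod.stdAddChar (N := p ^ k)) m n = 0 := by
  have hk0 : k ≠ 0 := by omega
  have := kl_local p k hk0
  have hP : ((p ^ (k - 1) : ℕ) : ZMod (p ^ k)) * ((p ^ (k - 1) : ℕ) : ZMod (p ^ k)) = 0 := by
    rw [← Nat.cast_mul, ZMod.natCast_eq_zero_iff, ← pow_add]
    exact pow_dvd_pow _ (by omega)
  have hP0 : ((p ^ (k - 1) : ℕ) : ZMod (p ^ k)) ≠ 0 := by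
    rw [Ne, ZMod.natCast_eq_zero_iff, Nat.pow_dvd_pow_iff_le_right hpp.out.one_lt]
    omega
  rw [klR_avg _ (ZMod.isPrimitive_stdAddChar _) _ _ _ hP]
  refine Finset.sum_eq_zero fun u _ => ?_
  rw [if_neg]
  intro hu
  apply hP0
  have hunit : IsUnit ((m : ZMod (p ^ k)) * (u : ZMod (p ^ k)) - n * (u⁻¹ : (ZMod (p ^ k))ˣ)) := by
    by_contra hcon
    have e1 : (m : ZMod (p ^ k)) * (u : ZMod (p ^ k)) = ((m : ZMod (p ^ k)) * (u : ZMod (p ^ k)) - n * (u⁻¹ : (ZMod (p ^ k))ˣ)) + n * (u⁻¹ : (ZMod (p ^ k))ˣ) := by ring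
    have e2 : (n : ZMod (p ^ k)) * (u⁻¹ : (ZMod (p ^ k))ˣ) = (m : ZMod (p ^ k)) * (u : ZMod (p ^ k)) + -((m : ZMod (p ^ k)) * (u : ZMod (p ^ k)) - n * (u⁻¹ : (ZMod (p ^ k))ˣ)) := by ring
    rcases h with ⟨h1, h2⟩ | ⟨h1, h2⟩
    · have h3 := (kl_unit_iff p k hk0 n).mpr h2
      have h4 : IsUnit ((n : ZMod (p ^ k)) * (u⁻¹ : (ZMod (p ^ k))ˣ)) := h3.mul (Units.isUnit _)
      rw [e2] at h4
      rcases IsLocalRing.isUnit_or_isUnit_of_isUnit_add h4 with h5 | h5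
      · exact (kl_unit_iff p k hk0 m).mp (isUnit_of_mul_isUnit_left h5) h1
      · exact hcon (IsUnit.neg_iff _ |>.mp h5)
    · have h3 := (kl_unit_iff p k hk0 m).mpr h1
      have h4 : IsUnit ((m : ZMod (p ^ k)) * (u : ZMod (p ^ k))) := h3.mul (Units.isUnit _)
      rw [e1] at h4
      rcases IsLocalRing.isUnit_or_isUnit_of_isUnit_add h4 with h5 | h5
      · exact hcon h5
      · exact (kl_unit_iff p k hk0 n).mp (isUnit_of_mul_isUnit_left h5) h2
  apply hunit.mul_right_cancel
  rw [hu, zero_mul]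

theorem kl_pp_odd (p k : ℕ) [hpp : Fact p.Prime] [NeZero (p ^ k)] (hp2 : p ≠ 2) (hk : 2 ≤ k) (m n : ℤ)
    (hm : ¬ (p : ℤ) ∣ m) (hn : ¬ (p : ℤ) ∣ n) :
    ‖klR (ZMod.stdAddChar (N := p ^ k)) m n‖ ≤ 2 * Real.sqrt ((p ^ k : ℕ) : ℝ) := by
  have hk0 : k ≠ 0 := by omega
  have := kl_local p k hk0
  have hmu := (kl_unit_iff p k hk0 m).mpr hm
  have hnu := (kl_unit_iff p k hk0 n).mpr hn
  have hp0 : (0:ℝ) < p := by exact_mod_cast hpp.out.pos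
  have h2u : IsUnit (2 : ZMod (p ^ k)) := by
    have := (kl_unit_iff p k hk0 2).mpr (by
      intro h
      have h' : p ∣ 2 := by exact_mod_cast h
      exact hp2 ((Nat.prime_dvd_prime_iff_eq hpp.out Nat.prime_two).mp h'))
    exact_mod_cast this
  have hz : ∀ a b : ℕ, k ≤ a + b → ((p ^ a : ℕ) : ZMod (p ^ k)) * ((p ^ b : ℕ) : ZMod (p ^ k)) = 0 := by
    intro a b hab
    rw [← Nat.cast_mul, ZMod.natCast_eq_zero_iff, ← pow_add]
    exact pow_dvd_pow _ hab
  have hZ : ∀ a : ℕ, (Finset.univ.filter (fun u : (ZMod (p ^ k))ˣ => ((p ^ a : ℕ) : ZMod (p ^ k)) * 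
      (m * (u : ZMod (p ^ k)) - n * (u⁻¹ : (ZMod (p ^ k))ˣ)) = 0)).card ≤ 2 * p ^ a := by
    intro a
    refine (kl_Z_odd (m : ZMod (p ^ k)) n ((p ^ a : ℕ) : ZMod (p ^ k)) hmu h2u 
      (Finset.univ.filter (fun x : ZMod (p ^ k) => ((p ^ a : ℕ) : ZMod (p ^ k)) * x = 0)) (by simp)).trans ?_
    have := kl_ann (p ^ k) (p ^ a) (Nat.pow_pos hpp.out.pos)
    omega
  have hsq : ∀ j : ℕ, Real.sqrt ((p : ℝ) ^ (2 * j)) = p ^ j := by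
    intro j
    rw [mul_comm, pow_mul, Real.sqrt_sq (by positivity)]
  rcases Nat.even_or_odd' k with ⟨j, hj | hj⟩
  · have h1 := klR_norm_le_Z (ZMod.stdAddChar (N := p ^ k)) (ZMod.isPrimitive_stdAddChar _) m n
      ((p ^ j : ℕ) : ZMod (p ^ k)) (hz j j (by omega))
    refine h1.trans ?_
    have h3 : Real.sqrt ((p ^ k : ℕ) : ℝ) = p ^ j := by rw [hj]; push_cast; exact hsq j
    rw [h3]
    exact_mod_cast hZ j
  · have h1 := klR_avg2 (ZMod.stdAddChar (N := p ^ k)) (ZMod.isPrimitive_stdAddChar _) m n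
      ((p ^ (j + 1) : ℕ) : ZMod (p ^ k)) ((p ^ j : ℕ) : ZMod (p ^ k)) (hz _ _ (by omega)) (hz _ _ (by omega))
      (by rw [← Nat.cast_mul, ← pow_add]; exact hz _ _ (by omega)) h2u hnu 
      (Finset.univ.filter (fun x : ZMod (p ^ k) => ((p ^ (2 * j) : ℕ) : ZMod (p ^ k)) * x = 0)) (by
        intro x hx
        rw [← Nat.cast_mul, ← pow_add, ← two_mul] at hx
        simpa using hx)
    have h2 := kl_ann (p ^ k) (p ^ (2 * j)) (Nat.pow_pos hpp.out.pos)
    set s := (Finset.univ.filter (fun x : ZMod (p ^ k) => ((p ^ (2 * j) : ℕ) : ZMod (p ^ k)) * x = 0))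
    have h3 := hZ (j + 1)
    set z := (Finset.univ.filter (fun u : (ZMod (p ^ k))ˣ => ((p ^ (j + 1) : ℕ) : ZMod (p ^ k)) * 
      (m * (u : ZMod (p ^ k)) - n * (u⁻¹ : (ZMod (p ^ k))ˣ)) = 0)).card
    set T := ‖klR (ZMod.stdAddChar (N := p ^ k)) m n‖
    rw [ZMod.card] at h1
    set q := Real.sqrt ((p ^ k : ℕ) : ℝ) with hq
    have hq0 : 0 < q := Real.sqrt_pos.mpr (by exact_mod_cast Nat.pow_pos hpp.out.pos)
    have hqq : ((p ^ k : ℕ) : ℝ) = q * q := (Real.mul_self_sqrt (by positivity)).symm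
    have h4 : Real.sqrt (((p ^ k : ℕ) : ℝ) * s.card) ≤ q * p ^ j := by
      rw [Real.sqrt_mul (by positivity), ← hsq j]
      refine mul_le_mul_of_nonneg_left (Real.sqrt_le_sqrt ?_) hq0.le
      exact_mod_cast h2
    have h5 : (z : ℝ) ≤ 2 * p ^ (j + 1) := by exact_mod_cast h3
    have h6 : ((p ^ k : ℕ) : ℝ) = p ^ (j + 1) * p ^ j := by
      rw [hj, ← pow_add]; push_cast; congr 1; ring
    have h7 : q * q * T ≤ q * q * (2 * q) := by
      rw [← hqq]
      refine h1.trans ?_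
      refine (mul_le_mul h5 h4 (Real.sqrt_nonneg _) (by positivity)).trans ?_
      rw [h6]
      apply le_of_eq; ring
    exact le_of_mul_le_mul_left h7 (by positivity)

theorem kl_pp_two (k : ℕ) [NeZero (2 ^ k)] (hk : 1 ≤ k) (m n : ℤ)
    (hm : ¬ (2 : ℤ) ∣ m) :
    ‖klR (ZMod.stdAddChar (N := 2 ^ k)) m n‖ ≤ (k + 1) * Real.sqrt ((2 ^ k : ℕ) : ℝ) := by
  have hk0 : k ≠ 0 := by omega
  have hpp : Fact (Nat.Prime 2) := ⟨Nat.prime_two⟩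
  have := kl_local 2 k hk0
  have hmu := (kl_unit_iff 2 k hk0 m).mpr (by exact_mod_cast hm)
  have hz : ∀ a b : ℕ, k ≤ a + b → ((2 ^ a : ℕ) : ZMod (2 ^ k)) * ((2 ^ b : ℕ) : ZMod (2 ^ k)) = 0 := by
    intro a b hab
    rw [← Nat.cast_mul, ZMod.natCast_eq_zero_iff, ← pow_add]
    exact pow_dvd_pow _ hab
  have hZ : ∀ a : ℕ, (Finset.univ.filter (fun u : (ZMod (2 ^ k))ˣ => ((2 ^ a : ℕ) : ZMod (2 ^ k)) * 
      (m * (u : ZMod (2 ^ k)) - n * (u⁻¹ : (ZMod (2 ^ k))ˣ)) = 0)).card ≤ 4 * 2 ^ a := by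
    intro a
    refine (kl_Z_two (m : ZMod (2 ^ k)) n ((2 ^ a : ℕ) : ZMod (2 ^ k)) hmu ?_
      (Finset.univ.filter (fun x : ZMod (2 ^ k) => ((2 ^ (a + 1) : ℕ) : ZMod (2 ^ k)) * x = 0)) ?_).trans ?_
    · intro u v
      obtain ⟨x, hx⟩ := ZMod.intCast_surjective (u : ZMod (2 ^ k))
      obtain ⟨y, hy⟩ := ZMod.intCast_surjective (v : ZMod (2 ^ k))
      have hx1 := (kl_unit_iff 2 k hk0 x).mp (by rw [hx]; exact u.isUnit)
      have hy1 := (kl_unit_iff 2 k hk0 y).mp (by rw [hy]; exact v.isUnit)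
      have h2 : (2 : ℤ) ∣ y - x := by push_cast at hx1 hy1; omega
      obtain ⟨w, hw⟩ := h2
      refine ⟨w, ?_⟩
      rw [← hx, ← hy, ← Int.cast_sub, hw]; push_cast; ring
    · intro x hx
      rw [Finset.mem_filter]
      refine ⟨Finset.mem_univ _, ?_⟩
      rw [pow_succ', Nat.cast_mul]; exact_mod_cast hx
    have := kl_ann (2 ^ k) (2 ^ (a + 1)) (Nat.pow_pos (by norm_num))
    rw [pow_succ] at this ⊢
    omega
  have hsq : ∀ j : ℕ, Real.sqrt ((2 : ℝ) ^ (2 * j)) = 2 ^ j := by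
    intro j
    rw [mul_comm, pow_mul, Real.sqrt_sq (by positivity)]
  have htriv := klR_norm_le_card (ZMod.stdAddChar (N := 2 ^ k)) (m : ZMod (2 ^ k)) n
  rw [ZMod.card_units_eq_totient, Nat.totient_prime_pow Nat.prime_two (by omega)] at htriv
  have hs2 : (1.4 : ℝ) ≤ Real.sqrt 2 := Real.le_sqrt_of_sq_le (by norm_num)
  rcases Nat.even_or_odd' k with ⟨j, hj | hj⟩
  · have h3 : Real.sqrt ((2 ^ k : ℕ) : ℝ) = 2 ^ j := by rw [hj]; push_cast; exact hsq j
    rw [h3]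
    by_cases hj1 : j = 1
    · generalize ‖klR (ZMod.stdAddChar (N := 2 ^ k)) m n‖ = T at htriv ⊢
      rw [hj1] at hj ⊢
      rw [hj] at htriv ⊢
      norm_num at htriv ⊢
      linarith
    have h1 := klR_norm_le_Z (ZMod.stdAddChar (N := 2 ^ k)) (ZMod.isPrimitive_stdAddChar _) m n
      ((2 ^ j : ℕ) : ZMod (2 ^ k)) (hz j j (by omega))
    refine h1.trans ?_
    have h4 : 4 * 2 ^ j ≤ (k + 1) * 2 ^ j := Nat.mul_le_mul_right _ (by omega)
    exact_mod_cast (hZ j).trans h4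
  · have h3 : Real.sqrt ((2 ^ k : ℕ) : ℝ) = 2 ^ j * Real.sqrt 2 := by 
      rw [hj, pow_succ]; push_cast; rw [Real.sqrt_mul (by positivity), hsq]
    rw [h3]
    by_cases hj0 : j = 0
    · generalize ‖klR (ZMod.stdAddChar (N := 2 ^ k)) m n‖ = T at htriv ⊢
      rw [hj0] at hj ⊢
      rw [hj] at htriv ⊢
      norm_num at htriv ⊢
      linarith
    by_cases hj1 : j = 1
    · generalize ‖klR (ZMod.stdAddChar (N := 2 ^ k)) m n‖ = T at htriv ⊢
      rw [hj1] at hj ⊢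
      rw [hj] at htriv ⊢
      norm_num at htriv ⊢
      linarith
    have h1 := klR_norm_le_Z (ZMod.stdAddChar (N := 2 ^ k)) (ZMod.isPrimitive_stdAddChar _) m n
      ((2 ^ (j + 1) : ℕ) : ZMod (2 ^ k)) (hz _ _ (by omega))
    refine h1.trans ?_
    have h4 : ((Finset.univ.filter (fun u : (ZMod (2 ^ k))ˣ => ((2 ^ (j + 1) : ℕ) : ZMod (2 ^ k)) * 
      (m * (u : ZMod (2 ^ k)) - n * (u⁻¹ : (ZMod (2 ^ k))ˣ)) = 0)).card : ℝ) ≤ 4 * 2 ^ (j + 1) := by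
      exact_mod_cast hZ (j + 1)
    refine h4.trans ?_
    have h5 : (6 : ℝ) ≤ k + 1 := by
      have : 6 ≤ k + 1 := by omega
      exact_mod_cast this
    have h6 : (0:ℝ) < 2 ^ j := by positivity
    have h7 : (8:ℝ) ≤ (k + 1) * Real.sqrt 2 := by nlinarith
    rw [pow_succ]
    nlinarith

end

section

theorem kl_std_mul (p M : ℕ) [NeZero M] [NeZero (p * M)] (hp : p ≠ 0) (x : ℤ) :
    ZMod.stdAddChar (N := p * M) ((p * x : ℤ) : ZMod (p * M)) = ZMod.stdAddChar (N := M) (x : ZMod M) := by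
  rw [ZMod.stdAddChar_coe, ZMod.stdAddChar_coe]
  congr 1
  have : (M : ℂ) ≠ 0 := by exact_mod_cast NeZero.ne M
  have : (p : ℂ) ≠ 0 := by exact_mod_cast hp
  push_cast
  field_simp

theorem kl_fiber_sum {G H : Type} [Group G] [Group H] [Fintype G] [Fintype H] (f : G →* H)
    (hf : Function.Surjective f) (F : H → ℂ) :
    (Fintype.card H : ℂ) * ∑ g, F (f g) = Fintype.card G * ∑ h, F h := by
  classical
  set c := (Finset.univ.filter (fun g => f g = 1)).card with hc
  have hfib : ∀ h, (Finset.univ.filter (fun g => f g = h)).card = c := by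
    intro h
    exact MonoidHom.card_fiber_eq_of_mem_range f (hf h) (hf 1)
  have h1 : Fintype.card G = Fintype.card H * c := by
    rw [← Finset.card_univ, Finset.card_eq_sum_card_fiberwise (t := Finset.univ) (f := f) (by intro; simp)]
    rw [Finset.sum_congr rfl fun h _ => hfib h]
    simp
  have h2 : ∑ g, F (f g) = c * ∑ h, F h := by
    rw [← Finset.sum_fiberwise (s := Finset.univ) (g := f), Finset.mul_sum]
    refine Finset.sum_congr rfl fun h _ => ?_
    rw [Finset.sum_congr rfl (g := fun _ => F h)]
    · simp [hfib]
    · intro u hu; rw [(Finset.mem_filter.mp hu).2]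
  rw [h2, h1]; push_cast; ring

theorem kl_descend (p M : ℕ) [NeZero M] [NeZero (p * M)] (hp : p ≠ 0) (m n : ℤ) :
    (Nat.totient M : ℂ) * klR (ZMod.stdAddChar (N := p * M)) ((p * m : ℤ) : ZMod (p * M)) ((p * n : ℤ) : ZMod (p * M)) =
     Nat.totient (p * M) * klR (ZMod.stdAddChar (N := M)) m n := by
  have hd : M ∣ p * M := dvd_mul_left _ _
  have := kl_fiber_sum (ZMod.unitsMap hd) (ZMod.unitsMap_surjective hd) (fun v => 
    ZMod.stdAddChar (N := M) ((m : ZMod M) * (v : ZMod M) + n * (v⁻¹ : (ZMod M)ˣ)))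
  rw [ZMod.card_units_eq_totient, ZMod.card_units_eq_totient] at this
  rw [klR, klR, ← this]
  congr 1
  refine Finset.sum_congr rfl fun u _ => ?_
  obtain ⟨a, ha⟩ := ZMod.intCast_surjective (u : ZMod (p * M))
  obtain ⟨b, hb⟩ := ZMod.intCast_surjective ((u⁻¹ : (ZMod (p * M))ˣ) : ZMod (p * M))
  rw [← map_inv]
  have h1 : ∀ w : (ZMod (p * M))ˣ, ((ZMod.unitsMap hd w : (ZMod M)ˣ) : ZMod M) = ZMod.castHom hd (ZMod M) (w : ZMod (p * M)) := by
    intro w; rfl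
  rw [h1, h1, ← ha, ← hb, map_intCast, map_intCast]
  have := kl_std_mul p M hp (m * a + n * b)
  push_cast at this ⊢
  rw [← this]
  congr 1
  ring

theorem kl_p_one (p : ℕ) [hpp : Fact p.Prime] (n : ZMod p) (hn : n ≠ 0) (ψ : AddChar (ZMod p) ℂ) (hψ : ψ ≠ 1) :
    ∑ u : (ZMod p)ˣ, ψ (n * (u : ZMod p)) = -1 := by
  classical
  rw [kl_sum_units (fun x => ψ (n * x))]
  have h1 : ∑ x : ZMod p, ψ (n * x) = 0 := by
    have := AddChar.sum_mulShift n (AddChar.IsPrimitive.of_ne_one hψ)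
    rw [if_neg hn] at this
    simpa [mul_comm] using this
  have h2 : ∀ x : ZMod p, (if x = 0 then 0 else ψ (n * x)) = ψ (n * x) - if x = 0 then 1 else 0 := by
    intro x
    split_ifs with h
    · simp [h]
    · simp
  rw [Finset.sum_congr rfl fun x _ => h2 x, Finset.sum_sub_distrib, h1]
  simp

theorem kl_pp_k1 (p : ℕ) [hpp : Fact p.Prime] (m n : ℤ) (h : ¬ ((p : ℤ) ∣ m ∧ (p : ℤ) ∣ n)) :
    ‖klR (ZMod.stdAddChar (N := p)) m n‖ ≤ 2 * Real.sqrt (p : ℝ) := by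
  have hψ : (ZMod.stdAddChar (N := p)) ≠ 1 := by
    have := ZMod.isPrimitive_stdAddChar p one_ne_zero
    rwa [AddChar.mulShift_one] at this
  have h1p : (1:ℝ) ≤ Real.sqrt p := Real.one_le_sqrt.mpr (by exact_mod_cast hpp.out.one_lt.le)
  by_cases hm : (p : ℤ) ∣ m
  · have hn : ¬ (p : ℤ) ∣ n := fun hn => h ⟨hm, hn⟩
    have e1 : (m : ZMod p) = 0 := (ZMod.intCast_zmod_eq_zero_iff_dvd m p).mpr hm
    have e2 : (n : ZMod p) ≠ 0 := fun h => hn ((ZMod.intCast_zmod_eq_zero_iff_dvd n p).mp h)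
    have : klR (ZMod.stdAddChar (N := p)) m n = -1 := by
      rw [klR, e1, ← kl_p_one p n e2 _ hψ]
      refine Fintype.sum_equiv (Equiv.inv _) _ _ ?_
      intro u; rw [zero_mul, zero_add]; rfl
    rw [this]; simp; linarith
  have e2 : (m : ZMod p) ≠ 0 := fun h => hm ((ZMod.intCast_zmod_eq_zero_iff_dvd m p).mp h)
  by_cases hn : (p : ℤ) ∣ n
  · have e1 : (n : ZMod p) = 0 := (ZMod.intCast_zmod_eq_zero_iff_dvd n p).mpr hn
    have : klR (ZMod.stdAddChar (N := p)) m n = -1 := by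
      rw [klR, e1, ← kl_p_one p m e2 _ hψ]
      refine Finset.sum_congr rfl fun u _ => ?_
      rw [zero_mul, add_zero]
    rw [this]; simp; linarith
  have e3 : (n : ZMod p) ≠ 0 := fun h => hn ((ZMod.intCast_zmod_eq_zero_iff_dvd n p).mp h)
  by_cases hp2 : p = 2
  · have := klR_norm_le_card (ZMod.stdAddChar (N := p)) (m : ZMod p) n
    rw [ZMod.card_units_eq_totient, Nat.totient_prime hpp.out] at this
    refine this.trans ?_
    have h9 : ((p - 1 : ℕ) : ℝ) = 1 := by rw [hp2]; norm_num
    rw [h9]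
    linarith
  exact kl_weil_prime p hp2 m n e2 e3 _ hψ

theorem kl_pp (p : ℕ) [hpp : Fact p.Prime] (k : ℕ) : ∀ (N : ℕ) [NeZero N], N = p ^ (k + 1) → ∀ (m n : ℤ),
    ‖klR (ZMod.stdAddChar (N := N)) m n‖ ≤ Real.sqrt (Nat.gcd (Int.gcd m n) N : ℝ) * Real.sqrt N * ((k + 1 : ℕ) + 1) := by
  have hp0 : (0:ℝ) < p := by exact_mod_cast hpp.out.pos
  have hnd : ∀ k : ℕ, ∀ (N : ℕ) [NeZero N], N = p ^ (k + 1) → ∀ (m n : ℤ), ¬ ((p : ℤ) ∣ m ∧ (p : ℤ) ∣ n) → 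
    ‖klR (ZMod.stdAddChar (N := N)) m n‖ ≤ Real.sqrt (Nat.gcd (Int.gcd m n) N : ℝ) * Real.sqrt N * ((k + 1 : ℕ) + 1) := by
    intro k N _ hN m n hmn
    have hg : (1:ℝ) ≤ Real.sqrt (Nat.gcd (Int.gcd m n) N : ℝ) := by
      rw [Real.one_le_sqrt]
      exact_mod_cast Nat.gcd_pos_of_pos_right _ (Nat.pos_of_ne_zero (NeZero.ne N))
    have h1 : ‖klR (ZMod.stdAddChar (N := N)) m n‖ ≤ ((k + 1 : ℕ) + 1) * Real.sqrt N := by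
      have h2k : (2:ℝ) ≤ ((k + 1 : ℕ) + 1) := by push_cast; linarith [(Nat.cast_nonneg k : (0:ℝ) ≤ k)]
      rcases Nat.eq_zero_or_pos k with rfl | hk
      · have : N = p := by rw [hN]; simp
        subst this
        refine (kl_pp_k1 N m n hmn).trans ?_
        exact mul_le_mul_of_nonneg_right h2k (Real.sqrt_nonneg _)
      subst hN
      by_cases hm : (p : ℤ) ∣ m
      · rw [kl_pp_one p (k + 1) (by omega) m n (Or.inl ⟨hm, fun hn => hmn ⟨hm, hn⟩⟩)]
        rw [norm_zero]; positivity
      by_cases hn : (p : ℤ) ∣ n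
      · rw [kl_pp_one p (k + 1) (by omega) m n (Or.inr ⟨hm, hn⟩)]
        rw [norm_zero]; positivity
      by_cases hp2 : p = 2
      · subst hp2
        exact kl_pp_two (k + 1) (by omega) m n hm
      · refine (kl_pp_odd p (k + 1) hp2 (by omega) m n hm hn).trans ?_
        exact mul_le_mul_of_nonneg_right h2k (Real.sqrt_nonneg _)
    refine h1.trans ?_
    have : 0 ≤ ((k + 1 : ℕ) + 1) * Real.sqrt N := by positivity
    nlinarith
  induction k with
  | zero =>
    intro N _ hN m n
    by_cases hmn : ((p : ℤ) ∣ m ∧ (p : ℤ) ∣ n)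
    · have : N = p := by rw [hN]; simp
      subst this
      have hg : Nat.gcd (Int.gcd m n) N = N := by
        apply Nat.gcd_eq_right
        exact Int.dvd_gcd hmn.1 hmn.2
      rw [hg]
      refine (klR_norm_le_card _ _ _).trans ?_
      rw [ZMod.card_units_eq_totient, Real.mul_self_sqrt hp0.le]
      have : (Nat.totient N : ℝ) ≤ N := by exact_mod_cast Nat.totient_le N
      push_cast
      nlinarith
    · exact hnd 0 N hN m n hmn
  | succ k ih =>
    intro N _ hN m n
    by_cases hmn : ((p : ℤ) ∣ m ∧ (p : ℤ) ∣ n)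
    · obtain ⟨⟨m', rfl⟩, ⟨n', rfl⟩⟩ := hmn
      set M := p ^ (k + 1) with hM
      have hNM : N = p * M := by rw [hN, hM]; ring
      have : NeZero M := ⟨(Nat.pow_pos hpp.out.pos).ne'⟩
      subst hNM
      have h1 := kl_descend p M hpp.out.ne_zero m' n'
      have h2 : Nat.totient (p * M) = p * Nat.totient M := by
        apply Nat.totient_mul_of_prime_of_dvd hpp.out
        rw [hM]; exact dvd_pow_self _ (by omega)
      rw [h2] at h1
      have h3 : (Nat.totient M : ℂ) ≠ 0 := by
        exact_mod_cast (Nat.totient_pos.mpr (Nat.pos_of_ne_zero (NeZero.ne M))).ne'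
      have h4 : klR (ZMod.stdAddChar (N := p * M)) ((p * m' : ℤ) : ZMod (p * M)) ((p * n' : ℤ) : ZMod (p * M)) =
         p * klR (ZMod.stdAddChar (N := M)) m' n' := by
        apply mul_left_cancel₀ h3
        rw [h1]; push_cast; ring
      rw [h4, norm_mul, Complex.norm_natCast]
      have h5 := ih M rfl m' n'
      have hg : Nat.gcd (Int.gcd (p * m') (p * n')) (p * M) = p * Nat.gcd (Int.gcd m' n') M := by
        rw [Int.gcd_mul_left, Int.natAbs_natCast, Nat.gcd_mul_left]
      rw [hg]
      push_cast
      rw [Real.sqrt_mul hp0.le, Real.sqrt_mul hp0.le]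
      set a := Real.sqrt ((Nat.gcd (Int.gcd m' n') M : ℕ) : ℝ)
      set b := Real.sqrt (M : ℝ)
      have hab : 0 ≤ a * b := mul_nonneg (Real.sqrt_nonneg _) (Real.sqrt_nonneg _)
      have h6 : Real.sqrt p * a * (Real.sqrt p * b) = p * (a * b) := by
        rw [mul_mul_mul_comm, Real.mul_self_sqrt hp0.le]
      rw [h6, mul_assoc]
      refine mul_le_mul_of_nonneg_left (h5.trans ?_) hp0.le
      refine mul_le_mul_of_nonneg_left ?_ hab
      push_cast; linarith
    · exact hnd (k + 1) N hN m n hmn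

end

section

theorem kl_std_coprime (a b : ℕ) [NeZero a] [NeZero b] [NeZero (a * b)] (a' b' : ℤ)
    (h : (a : ℤ) * a' + b * b' = 1) (x : ℤ) :
    ZMod.stdAddChar (N := a * b) (x : ZMod (a * b)) = 
      ZMod.stdAddChar (N := a) ((b' * x : ℤ) : ZMod a) * ZMod.stdAddChar (N := b) ((a' * x : ℤ) : ZMod b) := by
  rw [ZMod.stdAddChar_coe, ZMod.stdAddChar_coe, ZMod.stdAddChar_coe, ← Complex.exp_add]
  congr 1
  have h1 : (a : ℂ) ≠ 0 := by exact_mod_cast NeZero.ne a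
  have h2 : (b : ℂ) ≠ 0 := by exact_mod_cast NeZero.ne b
  have h3 : (a : ℂ) * a' + b * b' = 1 := by exact_mod_cast h
  push_cast
  field_simp
  linear_combination (- x : ℂ) * h3

theorem kl_coprime (a b : ℕ) [NeZero a] [NeZero b] [NeZero (a * b)] (hab : a.Coprime b) (a' b' : ℤ)
    (h : (a : ℤ) * a' + b * b' = 1) (m n : ℤ) :
    klR (ZMod.stdAddChar (N := a * b)) m n = 
      klR (ZMod.stdAddChar (N := a)) ((b' * m : ℤ) : ZMod a) ((b' * n : ℤ) : ZMod a) * 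
      klR (ZMod.stdAddChar (N := b)) ((a' * m : ℤ) : ZMod b) ((a' * n : ℤ) : ZMod b) := by
  rw [klR, klR, klR, Finset.sum_mul_sum, ← Fintype.sum_prod_type']
  let E : (ZMod (a * b))ˣ ≃* (ZMod a)ˣ × (ZMod b)ˣ := 
    (Units.mapEquiv (ZMod.chineseRemainder hab).toMulEquiv).trans MulEquiv.prodUnits
  refine Fintype.sum_equiv E.toEquiv _ _ ?_
  intro u
  obtain ⟨x, hx⟩ := ZMod.intCast_surjective (u : ZMod (a * b))
  obtain ⟨y, hy⟩ := ZMod.intCast_surjective ((u⁻¹ : (ZMod (a * b))ˣ) : ZMod (a * b))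
  have h1 : ∀ w : (ZMod (a * b))ˣ, ∀ z : ℤ, (z : ZMod (a * b)) = w → 
      (((E w).1 : (ZMod a)ˣ) : ZMod a) = z ∧ (((E w).2 : (ZMod b)ˣ) : ZMod b) = z := by
    intro w z hz
    have e1 : (((E w).1 : (ZMod a)ˣ) : ZMod a) = (ZMod.chineseRemainder hab (w : ZMod (a * b))).1 := rfl
    have e2 : (((E w).2 : (ZMod b)ˣ) : ZMod b) = (ZMod.chineseRemainder hab (w : ZMod (a * b))).2 := rfl
    rw [e1, e2, ← hz, map_intCast]
    exact ⟨rfl, rfl⟩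
  obtain ⟨hx1, hx2⟩ := h1 u x hx
  obtain ⟨hy1, hy2⟩ := h1 u⁻¹ y hy
  rw [map_inv] at hy1 hy2
  simp only [MulEquiv.toEquiv_eq_coe, EquivLike.coe_coe]
  rw [Prod.fst_inv] at hy1
  rw [Prod.snd_inv] at hy2
  rw [hx1, hx2, hy1, hy2, ← hx, ← hy]
  have := kl_std_coprime a b a' b' h (m * x + n * y)
  push_cast at this ⊢
  rw [this]
  congr 2 <;> ring

theorem kl_gcd_inv (a : ℕ) (b' m n : ℤ) (h : IsCoprime (b' : ℤ) a) :
    Nat.gcd (Int.gcd (b' * m) (b' * n)) a = Nat.gcd (Int.gcd m n) a := by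
  rw [Int.gcd_mul_left]
  apply Nat.Coprime.gcd_mul_left_cancel
  have := Int.isCoprime_iff_gcd_eq_one.mp h
  simpa [Int.gcd] using this

theorem kl_main (c : ℕ) : ∀ [NeZero c] (m n : ℤ), ‖klR (ZMod.stdAddChar (N := c)) m n‖ ≤ 
    Real.sqrt (Nat.gcd (Int.gcd m n) c : ℝ) * Real.sqrt (c : ℝ) * ((Nat.divisors c).card : ℝ) := by
  induction c using Nat.recOnPosPrimePosCoprime with
  | prime_pow p k hp hk =>
    intro _ m n
    have : Fact p.Prime := ⟨hp⟩
    obtain ⟨j, rfl⟩ : ∃ j, k = j + 1 := ⟨k - 1, by omega⟩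
    have := kl_pp p j (p ^ (j + 1)) rfl m n
    rw [Nat.divisors_prime_pow hp, Finset.card_map, Finset.card_range]
    exact_mod_cast this
  | zero => intro h; exact absurd rfl h.out
  | one =>
    intro _ m n
    refine (klR_norm_le_card _ _ _).trans ?_
    rw [ZMod.card_units_eq_totient]
    simp
  | coprime a b ha hb hab iha ihb =>
    intro _ m n
    have : NeZero a := ⟨by omega⟩
    have : NeZero b := ⟨by omega⟩
    obtain ⟨s, t, hst⟩ := Nat.isCoprime_iff_coprime.mpr hab
    have hst' : (a : ℤ) * s + b * t = 1 := by linear_combination hst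
    rw [kl_coprime a b hab s t hst' m n, norm_mul]
    have h1 := iha (t * m) (t * n)
    have h2 := ihb (s * m) (s * n)
    rw [kl_gcd_inv a t m n ⟨b, s, by linear_combination hst⟩] at h1
    rw [kl_gcd_inv b s m n ⟨a, t, by linear_combination hst⟩] at h2
    refine (mul_le_mul h1 h2 (norm_nonneg _) (by positivity)).trans (le_of_eq ?_)
    rw [Nat.Coprime.card_divisors_mul hab, Nat.Coprime.gcd_mul _ hab]
    push_cast
    rw [Real.sqrt_mul (by positivity), Real.sqrt_mul (by positivity)]
    ring

end

/-- **Weil's bound for Kloosterman sums.**  For any positive integer `c` and integers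
`m`, `n`, `|∑_{ad ≡ 1 (mod c)} e((ma + nd)/c)| ≤ gcd(m,n,c)^{1/2} c^{1/2} τ(c)`,
where `τ` is the divisor-counting function. -/
theorem weil_bound_kloosterman (c : ℕ) [NeZero c] (m n : ℤ) :
    ‖∑ u : (ZMod c)ˣ,
        e (((m * (((u : ZMod c)).val : ℤ) + n * (((u⁻¹ : (ZMod c)ˣ) : ZMod c).val : ℤ) : ℤ) : ℝ)
          / (c : ℝ))‖ ≤
      Real.sqrt (Nat.gcd (Int.gcd m n) c : ℝ) * Real.sqrt (c : ℝ) *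
        ((Nat.divisors c).card : ℝ) := by
  have h := kl_main c m n
  have h1 : ∑ u : (ZMod c)ˣ,
        e (((m * (((u : ZMod c)).val : ℤ) + n * (((u⁻¹ : (ZMod c)ˣ) : ZMod c).val : ℤ) : ℤ) : ℝ)
          / (c : ℝ)) = klR (ZMod.stdAddChar (N := c)) m n := by
    rw [klR]
    refine Finset.sum_congr rfl fun u _ => ?_
    have h2 := ZMod.stdAddChar_coe (N := c) (m * (((u : ZMod c)).val : ℤ) + n * (((u⁻¹ : (ZMod c)ˣ) : ZMod c).val : ℤ))
    have h3 : ((m * (((u : ZMod c)).val : ℤ) + n * (((u⁻¹ : (ZMod c)ˣ) : ZMod c).val : ℤ) : ℤ) : ZMod c) = 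
      m * (u : ZMod c) + n * ((u⁻¹ : (ZMod c)ˣ) : ZMod c) := by
      push_cast
      rw [ZMod.natCast_zmod_val, ZMod.natCast_zmod_val]
    rw [← h3, h2, e]
    congr 1
    push_cast
    ring
  rw [h1]
  exact h
end
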